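/- arXiv:1502.06875 — 2 statements merged into one kernel-verified Lean document; each statement's English description precedes it below -/
import Mathlib

section
/- Let ⟨V,E,d⟩ be a multi-weighted game graph and v₀ a vertex. If Player 1 wins the bounding game Γ⟨V,E,d⟩ from v₀, then she has a winning strategy from v₀ which ensures ‖ρ‖ ≤ (4|V|·‖E‖)^{2(d+2)³} for all consistent plays ρ from v₀ (the small hypercube property). -/
/-! Multi-weighted game graphs, plays, strategies, energy and bounding games. -/

/-- A configuration: a vertex together with an accumulated weight vector. -/
abbrev Conf (V : Type) (d : ℕ) := V × (Fin d → ℤ)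

/-- A multi-weighted game graph: Player-1 vertices, a finite set of
weighted edges, such that every vertex has an outgoing edge. -/
structure MWG (V : Type) [Fintype V] [DecidableEq V] (d : ℕ) where
  P1 : Finset V
  E : Set (V × (Fin d → ℤ) × V)
  finE : E.Finite
  serial : ∀ v : V, ∃ u v', (v, u, v') ∈ E

variable {V : Type} [Fintype V] [DecidableEq V] {d : ℕ}

/-- The norm of an integer vector: max of absolute values of entries. -/
def vnorm {d : ℕ} (u : Fin d → ℤ) : ℕ := Finset.univ.sup fun i => (u i).natAbs

/-- `‖E‖`: the maximal norm of an edge label. -/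
noncomputable def enorm (G : MWG V d) : ℕ := G.finE.toFinset.sup fun e => vnorm e.2.1

/-- One step along an edge of the graph. -/
def Step (G : MWG V d) (c c' : Conf V d) : Prop := (c.1, c'.2 - c.2, c'.1) ∈ G.E

/-- A finite path, as a list of configurations. -/
def IsPathL (G : MWG V d) (π : List (Conf V d)) : Prop := π.Chain' (Step G)

/-- An infinite play from `v₀`, starting with weight `0`. -/
def IsPlay (G : MWG V d) (v₀ : V) (ρ : ℕ → Conf V d) : Prop :=
  ρ 0 = (v₀, 0) ∧ ∀ n, Step G (ρ n) (ρ (n+1))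

/-- A strategy: given the history (past configurations) and the current
configuration, choose a weighted move. -/
abbrev Strat (V : Type) (d : ℕ) := List (Conf V d) → Conf V d → (Fin d → ℤ) × V

/-- A valid strategy for the player owning the vertices in `P` always
chooses an edge of the game graph from the current vertex. -/
def ValidStrat (G : MWG V d) (P : Set V) (σ : Strat V d) : Prop :=
  ∀ h c, IsPathL G (h ++ [c]) → c.1 ∈ P → (c.1, (σ h c).1, (σ h c).2) ∈ G.E

/-- The history of a play before instant `n`. -/
def hist (ρ : ℕ → Conf V d) (n : ℕ) : List (Conf V d) := (List.range n).map ρ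

/-- A play is consistent with strategy `σ` of the player owning `P` if at
every configuration with vertex in `P` the next configuration is obtained
by playing the edge prescribed by `σ`. -/
def Consistent (P : Set V) (σ : Strat V d) (ρ : ℕ → Conf V d) : Prop :=
  ∀ n, (ρ n).1 ∈ P →
    ρ (n+1) = ((σ (hist ρ n) (ρ n)).2, (ρ n).2 + (σ (hist ρ n) (ρ n)).1)

/-- Player owning `P` wins the game with payoff `Win` from `v₀`. -/
def Wins (G : MWG V d) (P : Set V) (Win : (ℕ → Conf V d) → Prop) (v₀ : V) : Prop :=
  ∃ σ : Strat V d, ValidStrat G P σ ∧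
    ∀ ρ, IsPlay G v₀ ρ → Consistent P σ ρ → Win ρ

/-- Player 1's winning condition in the energy game with initial credit `b`. -/
def EnergyOK (b : Fin d → ℕ) (ρ : ℕ → Conf V d) : Prop :=
  ∀ n i, 0 ≤ (b i : ℤ) + (ρ n).2 i

/-- Player 1's winning condition in the bounding game: the norms of the
total weights of all the finite prefixes are bounded. -/
def BoundedPlay (ρ : ℕ → Conf V d) : Prop :=
  ∃ B : ℕ, ∀ n, vnorm ((ρ n).2) ≤ B

def P1WinsEnergy (G : MWG V d) (b : Fin d → ℕ) (v₀ : V) : Prop :=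
  Wins G (G.P1 : Set V) (EnergyOK b) v₀

def P2WinsEnergy (G : MWG V d) (b : Fin d → ℕ) (v₀ : V) : Prop :=
  Wins G {v | v ∉ G.P1} (fun ρ => ¬ EnergyOK b ρ) v₀

def P1WinsBounding (G : MWG V d) (v₀ : V) : Prop :=
  Wins G (G.P1 : Set V) BoundedPlay v₀

def P2WinsBounding (G : MWG V d) (v₀ : V) : Prop :=
  Wins G {v | v ∉ G.P1} (fun ρ => ¬ BoundedPlay ρ) v₀

/-- The negative unit vector `-e i`. -/
def negUnit (d : ℕ) (i : Fin d) : Fin d → ℤ := fun j => if j = i then -1 else 0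

/-- The lossy game graph: add a self-loop labelled `-e i` at each Player-1
vertex, for every coordinate `i`. -/
def lossy (G : MWG V d) : MWG V d where
  P1 := G.P1
  E := G.E ∪ (fun p : V × Fin d => (p.1, negUnit d p.2, p.1)) '' {p | p.1 ∈ G.P1}
  finE := G.finE.union ((Set.toFinite _).image _)
  serial := fun v => by
    obtain ⟨u, v', h⟩ := G.serial v
    exact ⟨u, v', Set.mem_union_left _ h⟩

/-- Every cycle of the game graph contains at least one Player-1 vertex. -/
def EveryCycleHasP1 (G : MWG V d) : Prop :=
  ∀ (n : ℕ) (c : ℕ → Conf V d), 0 < n → (∀ j < n, Step G (c j) (c (j+1))) →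
    (c 0).1 = (c n).1 → ∃ j < n, (c j).1 ∈ G.P1

open Matrix

/-- lexicographic non-positivity along a list of functionals -/
def lexneg {d : ℕ} : List (Fin d → ℤ) → (Fin d → ℤ) → Prop
  | [], _ => True
  | r :: l, x => r ⬝ᵥ x < 0 ∨ (r ⬝ᵥ x = 0 ∧ lexneg l x)

theorem lexneg_zero {d : ℕ} (l : List (Fin d → ℤ)) : lexneg l 0 := by
  induction l with
  | nil => trivial
  | cons r l ih => right; exact ⟨by simp, ih⟩

theorem lexneg_add {d : ℕ} (l : List (Fin d → ℤ)) {x y : Fin d → ℤ}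
    (hx : lexneg l x) (hy : lexneg l y) : lexneg l (x + y) := by
  induction l with
  | nil => trivial
  | cons r l ih =>
    simp only [lexneg, dotProduct_add] at *
    rcases hx with hx | ⟨hx, hx'⟩ <;> rcases hy with hy | ⟨hy, hy'⟩
    · left; omega
    · left; omega
    · left; omega
    · right; exact ⟨by omega, ih hx' hy'⟩

theorem lexneg_total {d : ℕ} (l : List (Fin d → ℤ)) (x : Fin d → ℤ) :
    lexneg l x ∨ lexneg l (-x) := by
  induction l with
  | nil => left; trivial
  | cons r l ih =>
    simp only [lexneg, dotProduct_neg]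
    rcases lt_trichotomy (r ⬝ᵥ x) 0 with h | h | h
    · left; left; exact h
    · rcases ih with ih | ih
      · left; right; exact ⟨h, ih⟩
      · right; right; exact ⟨by omega, ih⟩
    · right; left; omega

theorem lexneg_prefix {d : ℕ} {l l' : List (Fin d → ℤ)} (h : l <+: l') {x : Fin d → ℤ}
    (hx : lexneg l' x) : lexneg l x := by
  obtain ⟨t, rfl⟩ := h
  induction l with
  | nil => trivial
  | cons r l ih =>
    simp only [lexneg, List.cons_append] at *
    rcases hx with hx | ⟨hx, hx'⟩
    · exact Or.inl hx
    · exact Or.inr ⟨hx, ih hx'⟩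

theorem lexneg_compat {d : ℕ} (l : List (Fin d → ℤ)) (x : Fin d → ℤ)
    (hc : ∀ r ∈ l, ∀ r' ∈ l, ¬ (0 < r ⬝ᵥ x ∧ r' ⬝ᵥ x < 0))
    (hx : lexneg l x) : ∀ r ∈ l, r ⬝ᵥ x ≤ 0 := by
  induction l with
  | nil => simp
  | cons r l ih =>
    rcases hx with hx | ⟨hx, hx'⟩
    · intro r' hr'
      by_contra hcon
      exact hc r' hr' r (by simp) ⟨by omega, hx⟩
    · intro r' hr'
      rcases List.mem_cons.1 hr' with rfl | hr'
      · exact hx.le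
      · exact ih (fun a ha b hb => hc a (by simp [ha]) b (by simp [hb])) hx' r' hr'

theorem lex_max {d : ℕ} (l : List (Fin d → ℤ)) (A : Set (Fin d → ℤ)) (hA : A.Finite)
    (hne : A.Nonempty) : ∃ s ∈ A, ∀ t ∈ A, lexneg l (t - s) := by
  induction A, hA using Set.Finite.induction_on with
  | empty => simp at hne
  | @insert a A _ _ ih =>
    rcases A.eq_empty_or_nonempty with rfl | hA
    · exact ⟨a, by simp, by simp [lexneg_zero]⟩
    · obtain ⟨s, hs, h⟩ := ih hA
      rcases lexneg_total l (a - s) with h1 | h1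
      · refine ⟨s, by simp [hs], ?_⟩
        rintro t (rfl | ht)
        · exact h1
        · exact h t ht
      · refine ⟨a, by simp, ?_⟩
        rintro t (rfl | ht)
        · simp [lexneg_zero]
        · have := lexneg_add l (h t ht) h1
          simpa using this

/-- the box of integer vectors -/
noncomputable def ibox (d : ℕ) (m : ℕ) : Finset (Fin d → ℤ) :=
  Fintype.piFinset fun _ => Finset.Icc (-(m : ℤ)) m

theorem mem_ibox {d m : ℕ} (c : Fin d → ℤ) : c ∈ ibox d m ↔ ∀ i, |c i| ≤ m := by
  simp [ibox, Fintype.mem_piFinset, abs_le]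

theorem card_ibox (d m : ℕ) : (ibox d m).card = (2 * m + 1) ^ d := by
  simp [ibox, Fintype.card_piFinset]
  congr 1
  omega

theorem single_mem_ibox {d m : ℕ} (hm : 1 ≤ m) (i : Fin d) : Pi.single i (1 : ℤ) ∈ ibox d m := by
  rw [mem_ibox]
  intro j
  by_cases h : j = i
  · subst h; simp; exact_mod_cast hm
  · simp [h]

attribute [local instance] Matrix.seminormedAddCommGroup in
theorem siegel_x {d m : ℕ} (hm : 1 ≤ m) (s : Fin d → ℤ) (hs : s ≠ 0) :
    ∃ x : Fin d → ℤ, x ≠ 0 ∧ (∀ i, |x i| ≤ ((d * m) ^ (d - 1) : ℕ)) ∧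
      ∀ c ∈ ibox d m, s ⬝ᵥ c = 0 → x ⬝ᵥ c = 0 := by
  classical
  obtain ⟨i0, hi0⟩ : ∃ i, s i ≠ 0 := by
    by_contra h; push Not at h; exact hs (funext h)
  have hd : 1 ≤ d := by have := i0.2; omega
  have hL : 1 ≤ (d * m) ^ (d - 1) := Nat.one_le_pow _ _ (by positivity)
  let ι := {c : Fin d → ℤ // c ∈ ibox d m ∧ s ⬝ᵥ c = 0}
  let v : ι → (Fin d → ℚ) := fun c i => (c.1 i : ℚ)
  obtain ⟨κ, f, hf, hspan, hli⟩ := exists_linearIndependent' ℚ v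
  have : Fintype κ := by
    have := hli.finite
    exact Fintype.ofFinite κ
  have hlin : ∀ (A : Set (Fin d → ℚ)) (x : Fin d → ℚ), (∀ c ∈ A, x ⬝ᵥ c = 0) →
      ∀ c ∈ Submodule.span ℚ A, x ⬝ᵥ c = 0 := by
    intro A x h c hc
    induction hc using Submodule.span_induction with
    | mem c hc => exact h c hc
    | zero => simp
    | add a b _ _ ha hb => simp [dotProduct_add, ha, hb]
    | smul a b _ hb => simp [hb]
  have hcast : ∀ x c : Fin d → ℤ, (fun i => (x i : ℚ)) ⬝ᵥ (fun i => (c i : ℚ)) = ((x ⬝ᵥ c : ℤ) : ℚ) := by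
    intro x c; simp [dotProduct]
  have hcard : Fintype.card κ < d := by
    have h1 : Fintype.card κ = Module.finrank ℚ (Submodule.span ℚ (Set.range (v ∘ f))) :=
      (finrank_span_eq_card hli).symm
    have h2 : Submodule.span ℚ (Set.range (v ∘ f)) < ⊤ := by
      rw [lt_top_iff_ne_top]
      intro htop
      have h3 := hlin (Set.range (v ∘ f)) (fun i => (s i : ℚ)) (by
        rintro c ⟨k, rfl⟩
        show (fun i => (s i : ℚ)) ⬝ᵥ (fun i => ((f k).1 i : ℚ)) = 0
        rw [hcast, (f k).2.2]; simp)
        (Pi.single i0 1) (by rw [htop]; trivial)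
      simp at h3
      exact hi0 h3
    have h4 := Submodule.finrank_lt h2.ne
    simp at h4
    omega
  rcases Nat.eq_zero_or_pos (Fintype.card κ) with h0 | h0
  · refine ⟨Pi.single i0 1, by simp, ?_, ?_⟩
    · intro j
      have := (mem_ibox _).1 (single_mem_ibox (m := 1) le_rfl i0) j
      calc _ ≤ _ := this
        _ ≤ _ := by exact_mod_cast hL
    · intro c hc hsc
      have hem : IsEmpty κ := Fintype.card_eq_zero_iff.1 h0
      have : v ⟨c, hc, hsc⟩ ∈ Submodule.span ℚ (Set.range (v ∘ f)) := by
        rw [hspan]; exact Submodule.subset_span ⟨_, rfl⟩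
      rw [Set.range_eq_empty, Submodule.span_empty, Submodule.mem_bot] at this
      have h5 := congrFun this i0
      simp [v] at h5
      simp [h5]
  · let A : Matrix κ (Fin d) ℤ := fun k j => (f k).1 j
    obtain ⟨t, ht0, hAt, htn⟩ := Int.Matrix.exists_ne_zero_int_vec_norm_le A (by simpa using hcard) h0
    refine ⟨t, ht0, ?_, ?_⟩
    · have hA : ‖A‖ ≤ m := by
        rw [Matrix.norm_le_iff (by positivity)]
        intro k j
        have := (mem_ibox _).1 (f k).2.1 j
        rw [Int.norm_eq_abs]
        exact_mod_cast this
      have hb : ((Fintype.card (Fin d) : ℕ) : ℝ) * max 1 ‖A‖ ≤ ((d * m : ℕ) : ℝ) := by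
        simp only [Fintype.card_fin]; push_cast
        gcongr
        exact max_le (by exact_mod_cast hm) hA
      have hb1 : (1:ℝ) ≤ ((d * m : ℕ) : ℝ) := by
        exact_mod_cast Nat.mul_pos hd hm
      have he : ((Fintype.card κ : ℕ) : ℝ) / ((Fintype.card (Fin d) : ℕ) - (Fintype.card κ : ℕ)) ≤ ((d - 1 : ℕ) : ℝ) := by
        simp only [Fintype.card_fin]
        have h6 : (1:ℝ) ≤ (d:ℝ) - (Fintype.card κ : ℝ) := by
          have : ((Fintype.card κ : ℕ) : ℝ) + 1 ≤ d := by exact_mod_cast hcard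
          linarith
        have h7 : ((Fintype.card κ : ℕ) : ℝ) ≤ ((d - 1 : ℕ) : ℝ) := by
          exact_mod_cast (by omega)
        rw [div_le_iff₀ (by linarith)]
        nlinarith [Nat.cast_nonneg (α := ℝ) (d-1)]
      have hfin : ‖t‖ ≤ (((d * m) ^ (d - 1) : ℕ) : ℝ) := by
        refine htn.trans ?_
        push_cast
        rw [← Real.rpow_natCast]
        calc _ ≤ (((d * m : ℕ) : ℝ)) ^ (((Fintype.card κ : ℕ) : ℝ) / ((Fintype.card (Fin d) : ℕ) - (Fintype.card κ : ℕ))) := by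
              apply Real.rpow_le_rpow (by positivity) hb
              apply div_nonneg (by positivity)
              simp only [Fintype.card_fin]
              have : ((Fintype.card κ : ℕ) : ℝ) + 1 ≤ d := by exact_mod_cast hcard
              linarith
          _ ≤ _ := by
              have := Real.rpow_le_rpow_of_exponent_le hb1 he
              push_cast at this ⊢
              exact this
      intro i
      have h8 := (norm_le_pi_norm t i).trans hfin
      rw [Int.norm_eq_abs] at h8
      exact_mod_cast h8
    · intro c hc hsc
      have h9 := hlin (Set.range (v ∘ f)) (fun i => (t i : ℚ)) (by
        rintro c ⟨k, rfl⟩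
        show (fun i => (t i : ℚ)) ⬝ᵥ (fun i => ((f k).1 i : ℚ)) = 0
        rw [hcast]
        have h10 := congrFun hAt k
        rw [dotProduct_comm]
        have h11 : (f k).1 ⬝ᵥ t = 0 := h10
        rw [h11]; simp) (v ⟨c, hc, hsc⟩) (by
          rw [hspan]; exact Submodule.subset_span ⟨_, rfl⟩)
      have h12 : (fun i => (t i : ℚ)) ⬝ᵥ (fun i => (c i : ℚ)) = 0 := h9
      rw [hcast] at h12
      exact_mod_cast h12

/-- conformal: `r` has signs weakly agreeing with `s` on `C` -/
def Cfm {d : ℕ} (C : Finset (Fin d → ℤ)) (s r : Fin d → ℤ) : Prop :=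
  ∀ c ∈ C, 0 ≤ (s ⬝ᵥ c) * (r ⬝ᵥ c) ∧ (s ⬝ᵥ c = 0 → r ⬝ᵥ c = 0)

/-- support -/
def supp {d : ℕ} (C : Finset (Fin d → ℤ)) (s : Fin d → ℤ) : Finset (Fin d → ℤ) :=
  C.filter fun c => s ⬝ᵥ c ≠ 0

theorem ex_ne {d m : ℕ} (hm : 1 ≤ m) (x : Fin d → ℤ) (hx : x ≠ 0) :
    ∃ c ∈ ibox d m, x ⬝ᵥ c ≠ 0 := by
  by_contra h
  push Not at h
  apply hx
  funext i
  have := h _ (single_mem_ibox hm i)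
  simpa using this

theorem min_ratio {d m : ℕ} (hm : 1 ≤ m) (s x : Fin d → ℤ) (hx : x ≠ 0)
    (h0 : ∀ c ∈ ibox d m, s ⬝ᵥ c = 0 → x ⬝ᵥ c = 0) :
    ∃ c0 ∈ ibox d m, x ⬝ᵥ c0 ≠ 0 ∧ s ⬝ᵥ c0 ≠ 0 ∧
      ∀ c ∈ ibox d m, |s ⬝ᵥ c0| * |x ⬝ᵥ c| ≤ |s ⬝ᵥ c| * |x ⬝ᵥ c0| := by
  have hne : (supp (ibox d m) x).Nonempty := by
    obtain ⟨c, hc, h⟩ := ex_ne hm x hx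
    exact ⟨c, by simp [supp, hc, h]⟩
  obtain ⟨c0, hc0, hmin⟩ := Finset.exists_min_image (supp (ibox d m) x)
    (fun c => |((s ⬝ᵥ c : ℤ) : ℚ)| / |((x ⬝ᵥ c : ℤ) : ℚ)|) hne
  simp only [supp, Finset.mem_filter] at hc0 hmin
  refine ⟨c0, hc0.1, hc0.2, fun h => hc0.2 (h0 c0 hc0.1 h), ?_⟩
  intro c hc
  by_cases hxc : x ⬝ᵥ c = 0
  · rw [hxc]; simp; positivity
  · have := hmin c ⟨hc, hxc⟩
    have hp1 : (0:ℚ) < |((x ⬝ᵥ c : ℤ) : ℚ)| := by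
      rw [abs_pos]; exact_mod_cast hxc
    have hp2 : (0:ℚ) < |((x ⬝ᵥ c0 : ℤ) : ℚ)| := by
      rw [abs_pos]; exact_mod_cast hc0.2
    rw [div_le_div_iff₀ hp2 hp1] at this
    exact_mod_cast this

theorem reduce_facts {p q P Q : ℤ} (hPQ : 0 ≤ p * q)
    (hle : Q * |q| ≤ |p| * P) (hP : 0 ≤ P) (hQ : 0 ≤ Q) :
    |P * p - Q * q| = P * |p| - Q * |q| ∧ 0 ≤ p * (P * p - Q * q) := by
  rcases le_total 0 p with hp | hp <;> rcases le_total 0 q with hq | hq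
  · rw [abs_of_nonneg hp, abs_of_nonneg hq] at *
    rw [abs_of_nonneg (by nlinarith)]
    exact ⟨rfl, mul_nonneg hp (by nlinarith)⟩
  · rcases hp.eq_or_lt with rfl | hp
    · simp at *
      have : Q * |q| = 0 := le_antisymm hle (by positivity)
      rw [abs_of_nonneg hQ, this]; simp
    · have : q = 0 := by nlinarith
      subst this
      simp [abs_mul, abs_of_nonneg hP]
      nlinarith [mul_nonneg hP hp.le]
  · rcases hp.eq_or_lt with rfl | hp
    · simp at *
      have : Q * |q| = 0 := le_antisymm hle (by positivity)
      rw [abs_of_nonneg hQ, this]; simp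
    · have : q = 0 := by nlinarith
      subst this
      simp [abs_mul, abs_of_nonneg hP]
      nlinarith [mul_nonneg hP (neg_nonneg.2 hp.le)]
  · rw [abs_of_nonpos hp, abs_of_nonpos hq] at *
    rw [abs_of_nonpos (by nlinarith)]
    exact ⟨by ring, mul_nonneg_of_nonpos_of_nonpos hp (by nlinarith)⟩

theorem Cfm.trans {d : ℕ} {C : Finset (Fin d → ℤ)} {s r t : Fin d → ℤ}
    (h1 : ∀ c ∈ C, 0 ≤ (s ⬝ᵥ c) * (r ⬝ᵥ c) ∧ (s ⬝ᵥ c = 0 → r ⬝ᵥ c = 0)) (h2 : Cfm C r t) :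
    Cfm C s t := by
  intro c hc
  obtain ⟨a1, a2⟩ := h1 c hc
  obtain ⟨b1, b2⟩ := h2 c hc
  refine ⟨?_, fun h => b2 (a2 h)⟩
  by_cases hr : r ⬝ᵥ c = 0
  · rw [b2 hr]; simp
  · have : 0 < (r ⬝ᵥ c) ^ 2 := by positivity
    have h3 : 0 ≤ ((s ⬝ᵥ c) * (t ⬝ᵥ c)) * (r ⬝ᵥ c) ^ 2 := by
      have := mul_nonneg a1 b1
      nlinarith
    exact nonneg_of_mul_nonneg_left h3 this

theorem conf_exists {d m : ℕ} (hm : 1 ≤ m) (k : ℕ) : ∀ (s : Fin d → ℤ), s ≠ 0 →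
    (supp (ibox d m) s).card = k →
    ∃ r : Fin d → ℤ, r ≠ 0 ∧ (∀ i, |r i| ≤ ((d * m) ^ (d - 1) : ℕ)) ∧ Cfm (ibox d m) s r := by
  induction k using Nat.strong_induction_on with
  | _ k ih =>
  intro s hs hk
  obtain ⟨x, hx0, hxL, hxs⟩ := siegel_x hm s hs
  obtain ⟨c0, hc0, hxc, hsc, hmin⟩ := min_ratio hm s x hx0 hxs
  -- fix the sign
  obtain ⟨y, hy0, hyL, hys, hyabs, hypos⟩ : ∃ y : Fin d → ℤ, y ≠ 0 ∧
      (∀ i, |y i| ≤ ((d * m) ^ (d - 1) : ℕ)) ∧ (∀ c ∈ ibox d m, s ⬝ᵥ c = 0 → y ⬝ᵥ c = 0) ∧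
      (∀ c, |y ⬝ᵥ c| = |x ⬝ᵥ c|) ∧ 0 < (s ⬝ᵥ c0) * (y ⬝ᵥ c0) := by
    rcases lt_or_gt_of_ne (mul_ne_zero hsc hxc) with h | h
    · refine ⟨-x, by simpa using hx0, by simpa using hxL, ?_, by simp, ?_⟩
      · intro c hc h; simp [hxs c hc h]
      · simp; exact h
    · exact ⟨x, hx0, hxL, hxs, fun _ => rfl, h⟩
  have hmin' : ∀ c ∈ ibox d m, |s ⬝ᵥ c0| * |y ⬝ᵥ c| ≤ |s ⬝ᵥ c| * |y ⬝ᵥ c0| := by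
    intro c hc; rw [hyabs, hyabs]; exact hmin c hc
  have hyc : y ⬝ᵥ c0 ≠ 0 := by intro h; rw [h] at hypos; simp at hypos
  set s' : Fin d → ℤ := |y ⬝ᵥ c0| • s - |s ⬝ᵥ c0| • y with hs'
  have hs'c : ∀ c, s' ⬝ᵥ c = |y ⬝ᵥ c0| * (s ⬝ᵥ c) - |s ⬝ᵥ c0| * (y ⬝ᵥ c) := by
    intro c; rw [hs', sub_dotProduct, smul_dotProduct, smul_dotProduct, smul_eq_mul, smul_eq_mul]
  have hs'c0 : s' ⬝ᵥ c0 = 0 := by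
    rw [hs'c]
    rcases lt_or_gt_of_ne hsc with h | h
    · have h2 : y ⬝ᵥ c0 < 0 := by nlinarith
      rw [abs_of_neg h, abs_of_neg h2]; ring
    · have h2 : 0 < y ⬝ᵥ c0 := by nlinarith
      rw [abs_of_pos h, abs_of_pos h2]; ring
  have hpy : 0 < |y ⬝ᵥ c0| := abs_pos.2 hyc
  have hps : 0 < |s ⬝ᵥ c0| := abs_pos.2 hsc
  have hcf : ∀ c ∈ ibox d m, 0 ≤ (s ⬝ᵥ c) * (s' ⬝ᵥ c) ∧ (s ⬝ᵥ c = 0 → s' ⬝ᵥ c = 0) := by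
    intro c hc
    have h1 := hmin' c hc
    constructor
    · rw [hs'c]
      have h2 : |s ⬝ᵥ c0| * ((s ⬝ᵥ c) * (y ⬝ᵥ c)) ≤ |s ⬝ᵥ c| * (|s ⬝ᵥ c| * |y ⬝ᵥ c0|) := by
        calc |s ⬝ᵥ c0| * ((s ⬝ᵥ c) * (y ⬝ᵥ c)) ≤ |s ⬝ᵥ c0| * (|s ⬝ᵥ c| * |y ⬝ᵥ c|) := by
              rw [← abs_mul (s ⬝ᵥ c)]
              exact mul_le_mul_of_nonneg_left (le_abs_self _) hps.le
          _ = |s ⬝ᵥ c| * (|s ⬝ᵥ c0| * |y ⬝ᵥ c|) := by ring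
          _ ≤ _ := mul_le_mul_of_nonneg_left h1 (abs_nonneg _)
      have h3 : |s ⬝ᵥ c| * |s ⬝ᵥ c| = (s ⬝ᵥ c) * (s ⬝ᵥ c) := abs_mul_abs_self _
      nlinarith
    · intro h; rw [hs'c, h, hys c hc h]; simp
  by_cases hz : s' = 0
  · refine ⟨y, hy0, hyL, ?_⟩
    intro c hc
    refine ⟨?_, hys c hc⟩
    have h1 := hs'c c
    rw [hz, zero_dotProduct] at h1
    have h2 : 0 ≤ |s ⬝ᵥ c0| * ((s ⬝ᵥ c) * (y ⬝ᵥ c)) := by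
      have : |s ⬝ᵥ c0| * ((s ⬝ᵥ c) * (y ⬝ᵥ c)) = |y ⬝ᵥ c0| * (s ⬝ᵥ c) ^ 2 := by
        linear_combination (s ⬝ᵥ c) * h1
      rw [this]; positivity
    exact nonneg_of_mul_nonneg_right h2 hps
  · have hlt : (supp (ibox d m) s').card < k := by
      rw [← hk]
      apply Finset.card_lt_card
      rw [Finset.ssubset_iff_of_subset]
      · exact ⟨c0, by simp [supp, hc0, hsc], by simp [supp, hs'c0]⟩
      · intro c hc
        simp only [supp, Finset.mem_filter] at hc ⊢
        exact ⟨hc.1, fun h => hc.2 ((hcf c hc.1).2 h)⟩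
    obtain ⟨r, hr0, hrL, hr⟩ := ih _ hlt s' hz rfl
    exact ⟨r, hr0, hrL, Cfm.trans hcf hr⟩

/-- support function of the zonotope -/
def hz {d : ℕ} (C : Finset (Fin d → ℤ)) (s : Fin d → ℤ) : ℤ := ∑ c ∈ C, |s ⬝ᵥ c|

theorem main_dual {d m : ℕ} (hm : 1 ≤ m) (N : ℤ) (a : Fin d → ℤ)
    (ha : ∀ r : Fin d → ℤ, r ≠ 0 → (∀ i, |r i| ≤ ((d * m) ^ (d - 1) : ℕ)) →
      r ⬝ᵥ a ≤ N * hz (ibox d m) r) (k : ℕ) : ∀ (s : Fin d → ℤ),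
    (supp (ibox d m) s).card = k → s ⬝ᵥ a ≤ N * hz (ibox d m) s := by
  induction k using Nat.strong_induction_on with
  | _ k ih =>
  intro s hk
  by_cases hs : s = 0
  · subst hs; simp [hz]
  obtain ⟨y, hy0, hyL, hys⟩ := conf_exists hm _ s hs rfl
  obtain ⟨c0, hc0, hyc, hsc, hmin⟩ := min_ratio hm s y hy0 (fun c hc => (hys c hc).2)
  set s' : Fin d → ℤ := |y ⬝ᵥ c0| • s - |s ⬝ᵥ c0| • y with hs'
  have hs'c : ∀ c, s' ⬝ᵥ c = |y ⬝ᵥ c0| * (s ⬝ᵥ c) - |s ⬝ᵥ c0| * (y ⬝ᵥ c) := by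
    intro c; rw [hs', sub_dotProduct, smul_dotProduct, smul_dotProduct, smul_eq_mul, smul_eq_mul]
  have hpy : 0 < |y ⬝ᵥ c0| := abs_pos.2 hyc
  have hfacts : ∀ c ∈ ibox d m, |s' ⬝ᵥ c| = |y ⬝ᵥ c0| * |s ⬝ᵥ c| - |s ⬝ᵥ c0| * |y ⬝ᵥ c| := by
    intro c hc
    rw [hs'c]
    exact (reduce_facts (hys c hc).1 (hmin c hc) (abs_nonneg _) (abs_nonneg _)).1
  have hs'c0 : s' ⬝ᵥ c0 = 0 := by
    have := hfacts c0 hc0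
    rw [← abs_eq_zero, this]; ring
  have hlt : (supp (ibox d m) s').card < k := by
    rw [← hk]
    apply Finset.card_lt_card
    rw [Finset.ssubset_iff_of_subset]
    · exact ⟨c0, by simp [supp, hc0, hsc], by simp [supp, hs'c0]⟩
    · intro c hc
      simp only [supp, Finset.mem_filter] at hc ⊢
      refine ⟨hc.1, fun h => hc.2 ?_⟩
      rw [hs'c, h, (hys c hc.1).2 h]; simp
  have h1 := ih _ hlt s' rfl
  have h2 := ha y hy0 hyL
  have h3 : hz (ibox d m) s' = |y ⬝ᵥ c0| * hz (ibox d m) s - |s ⬝ᵥ c0| * hz (ibox d m) y := by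
    simp only [hz, Finset.mul_sum, ← Finset.sum_sub_distrib]
    exact Finset.sum_congr rfl hfacts
  rw [h3, hs'c] at h1
  have h4 := mul_le_mul_of_nonneg_left h2 (abs_nonneg (s ⬝ᵥ c0))
  have h5 : |y ⬝ᵥ c0| * (s ⬝ᵥ a) ≤ |y ⬝ᵥ c0| * (N * hz (ibox d m) s) := by
    nlinarith
  exact le_of_mul_le_mul_left h5 hpy

theorem compat_of_slack {d m : ℕ} (hm : 1 ≤ m) (N : ℤ) (hN : 0 ≤ N) (a : Fin d → ℤ)
    (ha : ∀ r : Fin d → ℤ, r ≠ 0 → (∀ i, |r i| ≤ ((d * m) ^ (d - 1) : ℕ)) →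
      r ⬝ᵥ a ≤ N * hz (ibox d m) r) (r r' : Fin d → ℤ)
    (h1 : N * hz (ibox d m) r - r ⬝ᵥ a < N) (h2 : N * hz (ibox d m) r' - r' ⬝ᵥ a < N)
    (c : Fin d → ℤ) (hc : c ∈ ibox d m) : ¬ (0 < r ⬝ᵥ c ∧ r' ⬝ᵥ c < 0) := by
  rintro ⟨p1, p2⟩
  have h3 := main_dual hm N a ha _ (r + r') rfl
  have h4 : hz (ibox d m) (r + r') + 2 ≤ hz (ibox d m) r + hz (ibox d m) r' := by
    simp only [hz, ← Finset.sum_add_distrib]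
    rw [← Finset.add_sum_erase _ _ hc, ← Finset.add_sum_erase _ (fun c => |r ⬝ᵥ c| + |r' ⬝ᵥ c|) hc]
    have h5 : ∑ x ∈ (ibox d m).erase c, |(r + r') ⬝ᵥ x| ≤
        ∑ x ∈ (ibox d m).erase c, (|r ⬝ᵥ x| + |r' ⬝ᵥ x|) := by
      apply Finset.sum_le_sum
      intro x _
      rw [add_dotProduct]
      exact abs_add_le _ _
    have h6 : |(r + r') ⬝ᵥ c| + 2 ≤ |r ⬝ᵥ c| + |r' ⬝ᵥ c| := by
      rw [add_dotProduct, abs_of_pos p1, abs_of_neg p2]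
      rcases abs_cases (r ⬝ᵥ c + r' ⬝ᵥ c) with h | h <;> omega
    linarith
  rw [add_dotProduct] at h3
  nlinarith

theorem hz_ge {d m : ℕ} (hm : 1 ≤ m) (r : Fin d → ℤ) (hr : r ≠ 0) : 1 ≤ hz (ibox d m) r := by
  obtain ⟨c, hc, h⟩ := ex_ne hm r hr
  have h1 : |r ⬝ᵥ c| ≤ hz (ibox d m) r :=
    Finset.single_le_sum (f := fun c => |r ⬝ᵥ c|) (fun _ _ => abs_nonneg _) hc
  have := abs_pos.2 h
  omega

theorem walk_simple {V : Type} {d : ℕ} (Al : V → (Fin d → ℤ) → V → Prop) (r : Fin d → ℤ) (D : ℤ)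
    (hD : ∀ v u v', Al v u v' → r ⬝ᵥ u ≤ D) (f : ℕ → V) (w : ℕ → Fin d → ℤ) (k : ℕ)
    (h : ∀ t < k, Al (f t) (w (t+1) - w t) (f (t+1))) : r ⬝ᵥ (w k - w 0) ≤ k * D := by
  induction k with
  | zero => simp
  | succ k ih =>
    have h1 := ih (fun t ht => h t (by omega))
    have h2 := hD _ _ _ (h k (by omega))
    have h3 : w (k+1) - w 0 = (w k - w 0) + (w (k+1) - w k) := by abel
    rw [h3, dotProduct_add]
    push_cast
    linarith

theorem walk_bound {V : Type} [Fintype V] {d : ℕ} (Al : V → (Fin d → ℤ) → V → Prop)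
    (r : Fin d → ℤ) (D : ℤ) (hD0 : 0 ≤ D)
    (hD : ∀ v u v', Al v u v' → r ⬝ᵥ u ≤ D)
    (hcyc : ∀ (k : ℕ) (f : ℕ → V) (w : ℕ → Fin d → ℤ), k ≤ Fintype.card V →
      (∀ t < k, Al (f t) (w (t+1) - w t) (f (t+1))) → f 0 = f k → r ⬝ᵥ (w k - w 0) ≤ 0)
    (k : ℕ) : ∀ (f : ℕ → V) (w : ℕ → Fin d → ℤ),
      (∀ t < k, Al (f t) (w (t+1) - w t) (f (t+1))) →
      r ⬝ᵥ (w k - w 0) ≤ Fintype.card V * D := by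
  induction k using Nat.strong_induction_on with
  | _ k ih =>
  intro f w h
  by_cases hk : k ≤ Fintype.card V
  · refine (walk_simple Al r D hD f w k h).trans ?_
    exact mul_le_mul_of_nonneg_right (by exact_mod_cast hk) hD0
  · push Not at hk
    obtain ⟨i, j, hij, hf, hj⟩ : ∃ i j : ℕ, i < j ∧ f i = f j ∧ j ≤ Fintype.card V := by
      obtain ⟨x, y, hxy, he⟩ := Fintype.exists_ne_map_eq_of_card_lt
        (fun t : Fin (Fintype.card V + 1) => f t) (by simp)
      rcases lt_or_gt_of_ne hxy with h1 | h1
      · exact ⟨x, y, h1, he, by omega⟩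
      · exact ⟨y, x, h1, he.symm, by omega⟩
    have h1 := hcyc (j - i) (fun t => f (i + t)) (fun t => w (i + t)) (by omega)
      (fun t ht => h (i + t) (by omega)) (by simp only [add_zero]; rw [hf]; congr 1; omega)
    simp only [add_zero] at h1
    rw [show i + (j - i) = j by omega] at h1
    have h2 := ih (k - (j - i)) (by omega) (fun t => if t ≤ i then f t else f (t + (j - i)))
      (fun t => if t ≤ i then w t else w (t + (j - i)) - (w j - w i)) (by
        intro t ht
        rcases lt_trichotomy t i with h3 | h3 | h3
        · simp only [h3.le, if_true, show t + 1 ≤ i by omega]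
          exact h t (by omega)
        · subst h3
          simp only [le_refl, if_true, show ¬ (t + 1 ≤ t) by omega, if_false]
          have h4 := h j (by omega)
          rw [← hf] at h4
          rw [show t + 1 + (j - t) = j + 1 by omega]
          convert h4 using 1
          abel
        · simp only [show ¬ t ≤ i by omega, show ¬ t + 1 ≤ i by omega, if_false]
          have h4 := h (t + (j - i)) (by omega)
          rw [show t + 1 + (j - i) = t + (j - i) + 1 by omega]
          convert h4 using 1
          abel)
    simp only [Nat.zero_le, if_true] at h2
    have h5 : (if k - (j - i) ≤ i then w (k - (j - i)) else w (k - (j - i) + (j - i)) - (w j - w i))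
        = w k - (w j - w i) := by
      rw [show k - (j - i) + (j - i) = k by omega]
      split_ifs with h6
      · have : k = j := by omega
        subst this
        rw [show k - (k - i) = i by omega]; abel
      · rfl
    rw [h5] at h2
    have h6 : w k - w 0 = (w k - (w j - w i) - w 0) + (w j - w i) := by abel
    rw [h6, dotProduct_add]
    linarith

theorem prefix_filter {α : Type} (q : α → Bool) (r : α) (l : List α) : ∀ p : List α,
    p ++ [r] <+: l.filter q → ∃ p0, p0 ++ [r] <+: l ∧ p0.filter q = p := by
  induction l with
  | nil => intro p h; simp at h
  | cons a l ih =>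
    intro p h
    by_cases ha : q a
    · rw [List.filter_cons_of_pos ha] at h
      cases p with
      | nil =>
        simp only [List.nil_append, List.cons_prefix_cons] at h
        refine ⟨[], ?_, by simp⟩
        simp [h.1]
      | cons b p =>
        simp only [List.cons_append, List.cons_prefix_cons] at h
        obtain ⟨p0, h1, h2⟩ := ih p h.2
        refine ⟨a :: p0, ?_, ?_⟩
        · simpa using h1
        · rw [List.filter_cons_of_pos ha, h2, h.1]
    · rw [List.filter_cons_of_neg ha] at h
      obtain ⟨p0, h1, h2⟩ := ih p h
      refine ⟨a :: p0, by simpa using h1, by rw [List.filter_cons_of_neg ha, h2]⟩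

theorem prefix_append_notMem {α : Type} (r : α) (B : List α) (hr : r ∉ B) : ∀ (A p : List α),
    p ++ [r] <+: A ++ B → p ++ [r] <+: A := by
  intro A
  induction A with
  | nil =>
    intro p h
    exfalso
    apply hr
    simp only [List.nil_append] at h
    exact h.subset (by simp)
  | cons a A ih =>
    intro p h
    cases p with
    | nil => simp only [List.nil_append, List.cons_append, List.cons_prefix_cons] at h ⊢; simp [h.1]
    | cons b p =>
      simp only [List.cons_append, List.cons_prefix_cons] at h ⊢
      exact ⟨h.1, ih p h.2⟩

/-- slack -/
noncomputable def slk {d : ℕ} (m : ℕ) (N : ℤ) (a r : Fin d → ℤ) : ℤ := N * hz (ibox d m) r - r ⬝ᵥ a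

/-- small nonzero functionals -/
noncomputable def Rset (d m : ℕ) : Finset (Fin d → ℤ) := (ibox d ((d * m) ^ (d - 1))).erase 0

/-- update of the priority list -/
noncomputable def upd {d : ℕ} (m : ℕ) (N : ℤ) (l : List (Fin d → ℤ)) (a : Fin d → ℤ) :
    List (Fin d → ℤ) :=
  l.filter (fun r => decide (slk m N a r < N)) ++
    (Rset d m).toList.filter (fun r => decide (r ∉ l ∧ slk m N a r < N))

theorem mem_Rset {d m : ℕ} (r : Fin d → ℤ) :
    r ∈ Rset d m ↔ r ≠ 0 ∧ ∀ i, |r i| ≤ ((d * m) ^ (d - 1) : ℕ) := by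
  rw [Rset, Finset.mem_erase, mem_ibox]

/-- The amortised analysis. -/
theorem dynamics {V : Type} [Fintype V] {d : ℕ} (m : ℕ) (hm : 1 ≤ m) (D N : ℤ) (hD0 : 0 ≤ D)
    (hN : N = ((Rset d m).card + 1) * ((Fintype.card V + 1) * D))
    (Al : List (Fin d → ℤ) → V → (Fin d → ℤ) → V → Prop)
    (hD : ∀ r ∈ Rset d m, ∀ l v u v', Al l v u v' → r ⬝ᵥ u ≤ D)
    (hcyc : ∀ (l : List (Fin d → ℤ)) (r : Fin d → ℤ), r ∈ l →
      (∀ c ∈ ibox d m, ∀ r ∈ l, ∀ r' ∈ l, ¬ (0 < r ⬝ᵥ c ∧ r' ⬝ᵥ c < 0)) →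
      ∀ (k : ℕ) (f : ℕ → V) (w : ℕ → Fin d → ℤ), k ≤ Fintype.card V →
      (∀ t < k, Al l (f t) (w (t+1) - w t) (f (t+1))) → f 0 = f k → r ⬝ᵥ (w k - w 0) ≤ 0)
    (v : ℕ → V) (a : ℕ → Fin d → ℤ) (l : ℕ → List (Fin d → ℤ))
    (ha0 : a 0 = 0) (hl0 : l 0 = upd m N [] (a 0))
    (hl : ∀ t, l (t+1) = upd m N (l t) (a (t+1)))
    (hAl : ∀ t l0, l0 <+: l t → Al l0 (v t) (a (t+1) - a t) (v (t+1))) :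
    ∀ t, ∀ r ∈ Rset d m, 0 ≤ slk m N (a t) r := by
  set n := Fintype.card V with hn
  set E : ℤ := (n + 1) * D with hE
  set K := (Rset d m).card with hK
  have hE0 : 0 ≤ E := by positivity
  have hDE : D ≤ E := by rw [hE]; nlinarith [Nat.cast_nonneg (α := ℤ) n]
  have hN0 : 0 ≤ N := by rw [hN]; positivity
  -- members of the lists
  have hmem : ∀ t, ∀ r ∈ l t, slk m N (a t) r < N := by
    intro t r hr
    cases t with
    | zero => rw [hl0] at hr; simp [upd] at hr; exact hr.2
    | succ t =>
      rw [hl] at hr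
      simp only [upd, List.mem_append, List.mem_filter, decide_eq_true_eq] at hr
      rcases hr with hr | hr
      · exact hr.2
      · exact hr.2.2
  have hmemR : ∀ t, ∀ r ∈ l t, r ∈ Rset d m := by
    intro t
    induction t with
    | zero => intro r hr; rw [hl0] at hr; simp [upd] at hr; exact hr.1
    | succ t ih =>
      intro r hr
      rw [hl] at hr
      simp only [upd, List.mem_append, List.mem_filter, decide_eq_true_eq, Finset.mem_toList] at hr
      rcases hr with hr | hr
      · exact ih r hr.1
      · exact hr.1
  have hnot : ∀ t, ∀ r ∈ Rset d m, r ∉ l t → N ≤ slk m N (a t) r := by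
    intro t r hr hrl
    by_contra hcon
    push Not at hcon
    apply hrl
    cases t with
    | zero => rw [hl0]; simp [upd, hr, hcon]
    | succ t =>
      rw [hl]
      simp only [upd, List.mem_append, List.mem_filter, decide_eq_true_eq, Finset.mem_toList]
      by_cases h : r ∈ l t
      · exact Or.inl ⟨h, hcon⟩
      · exact Or.inr ⟨hr, h, hcon⟩
  have hnd : ∀ t, (l t).Nodup := by
    intro t
    induction t with
    | zero =>
      rw [hl0]
      simp only [upd, List.filter_nil, List.nil_append]
      exact (Finset.nodup_toList _).filter _
    | succ t ih =>
      rw [hl, upd, List.nodup_append]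
      refine ⟨ih.filter _, (Finset.nodup_toList _).filter _, ?_⟩
      intro x hx y hy hxy
      subst hxy
      simp only [List.mem_filter, decide_eq_true_eq] at hx hy
      exact hy.2.1 hx.1
  have hlen : ∀ t p r, p ++ [r] <+: l t → p.length + 1 ≤ K := by
    intro t p r h
    have h1 : (p ++ [r]).Nodup := (hnd t).sublist h.sublist
    have h2 : (p ++ [r]).toFinset ⊆ Rset d m := by
      intro x hx
      exact hmemR t x (h.subset (List.mem_toFinset.1 hx))
    have h3 := Finset.card_le_card h2
    rw [List.toFinset_card_of_nodup h1] at h3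
    simpa using h3
  have hstep : ∀ t, ∀ r ∈ Rset d m, slk m N (a t) r - D ≤ slk m N (a (t+1)) r := by
    intro t r hr
    have h1 := hD r hr _ _ _ _ (hAl t [] List.nil_prefix)
    rw [dotProduct_sub] at h1
    simp only [slk]
    linarith
  -- the walk estimate
  have hwalk : ∀ τ t p r, τ ≤ t → (∀ r ∈ Rset d m, 0 ≤ slk m N (a τ) r) →
      (∀ t', τ ≤ t' → t' ≤ t → p ++ [r] <+: l t') →
      slk m N (a τ) r - n * D ≤ slk m N (a t) r := by
    intro τ t p r hτ hK0 hp
    have hpτ := hp τ le_rfl hτ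
    have hrR : r ∈ Rset d m := hmemR τ r (hpτ.subset (by simp))
    have h1 := walk_bound (Al (p ++ [r])) r D hD0 (hD r hrR _) (hcyc (p ++ [r]) r (by simp) (by
      intro c hc r1 hr1 r2 hr2
      refine compat_of_slack hm N hN0 (a τ) ?_ r1 r2 (hmem τ r1 (hpτ.subset hr1))
        (hmem τ r2 (hpτ.subset hr2)) c hc
      intro r' h0 hL
      have := hK0 r' ((mem_Rset r').2 ⟨h0, hL⟩)
      simp only [slk] at this
      linarith)) (t - τ) (fun i => v (τ + i)) (fun i => a (τ + i)) (by
        intro i hi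
        exact hAl (τ + i) _ (hp (τ + i) (by omega) (by omega)))
    simp only [add_zero] at h1
    rw [show τ + (t - τ) = t by omega, dotProduct_sub] at h1
    simp only [slk]
    linarith
  -- main invariant
  have key : ∀ t, (∀ r ∈ Rset d m, 0 ≤ slk m N (a t) r) ∧
      ∀ p r, p ++ [r] <+: l t → ∃ τ ≤ t, (∀ t', τ ≤ t' → t' ≤ t → p ++ [r] <+: l t') ∧
        N - (K - p.length) * E ≤ slk m N (a τ) r := by
    intro t
    induction t using Nat.strong_induction_on with
    | _ t ih =>
    have hinv : ∀ p r, p ++ [r] <+: l t → ∃ τ ≤ t, (∀ t', τ ≤ t' → t' ≤ t → p ++ [r] <+: l t') ∧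
        N - (K - p.length) * E ≤ slk m N (a τ) r := by
      intro p r hp
      have hrR : r ∈ Rset d m := hmemR t r (hp.subset (by simp))
      have hself : ∀ t', t ≤ t' → t' ≤ t → p ++ [r] <+: l t' := by
        intro t' h1 h2
        rw [show t' = t by omega]; exact hp
      have hplen := hlen t p r hp
      have hplen' : (p.length : ℤ) + 1 ≤ K := by exact_mod_cast hplen
      cases t with
      | zero =>
        refine ⟨0, le_rfl, hself, ?_⟩
        have h1 : N ≤ slk m N (a 0) r := by
          simp only [slk, ha0, dotProduct_zero, sub_zero]
          have := hz_ge hm r ((mem_Rset r).1 hrR).1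
          nlinarith
        nlinarith
      | succ t =>
        have iht := ih t (by omega)
        by_cases hrt : r ∈ l t
        · have h1 : p ++ [r] <+: (l t).filter (fun r => decide (slk m N (a (t+1)) r < N)) := by
            apply prefix_append_notMem r _ _ _ _ (by rw [hl] at hp; exact hp)
            simp [hrt]
          obtain ⟨p0, h2, h3⟩ := prefix_filter _ _ _ _ h1
          obtain ⟨τ, hτ, hpre, hsl⟩ := iht.2 p0 r h2
          by_cases hpp : p0 = p
          · subst hpp
            refine ⟨τ, by omega, ?_, hsl⟩
            intro t' h4 h5
            rcases Nat.lt_or_ge t' (t+1) with h6 | h6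
            · exact hpre t' h4 (by omega)
            · exact hself t' h6 h5
          · refine ⟨t+1, le_rfl, hself, ?_⟩
            have h4 : p.length < p0.length := by
              have hsub : p.Sublist p0 := h3 ▸ List.filter_sublist
              rcases hsub.length_le.lt_or_eq with h5 | h5
              · exact h5
              · exact absurd (hsub.eq_of_length h5).symm hpp
            have h4' : (p.length : ℤ) + 1 ≤ p0.length := by exact_mod_cast h4
            have h5 := hwalk τ t p0 r hτ ((ih τ (by omega)).1) hpre
            have h6 := hstep t r hrR
            have h7 : E = n * D + D := by rw [hE]; ring
            nlinarith
        · refine ⟨t+1, le_rfl, hself, ?_⟩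
          have h1 := hnot t r hrR hrt
          have h2 := hstep t r hrR
          nlinarith
    refine ⟨?_, hinv⟩
    intro r hr
    by_cases hrt : r ∈ l t
    · obtain ⟨p, q, hpq⟩ := List.append_of_mem hrt
      obtain ⟨τ, hτ, hpre, hsl⟩ := hinv p r ⟨q, by rw [hpq]; simp⟩
      have hbase : n * D ≤ slk m N (a τ) r := by
        have h7 : E = n * D + D := by rw [hE]; ring
        have h8 : (K - p.length : ℤ) * E ≤ K * E := by
          have : (0:ℤ) ≤ p.length := by positivity
          nlinarith
        have : N = K * E + E := by rw [hN]; ring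
        linarith
      have hnD : 0 ≤ n * D := by positivity
      rcases hτ.eq_or_lt with h1 | h1
      · subst h1; linarith
      · have := hwalk τ t p r hτ ((ih τ h1).1) hpre
        linarith
    · exact hN0.trans (hnot t r hr hrt)
  exact fun t => (key t).1

theorem vnorm_le {d : ℕ} {u : Fin d → ℤ} {B : ℕ} : vnorm u ≤ B ↔ ∀ i, |u i| ≤ B := by
  simp only [vnorm, Finset.sup_le_iff, Finset.mem_univ, true_imp_iff]
  refine forall_congr' fun i => ?_
  rw [Int.abs_eq_natAbs]
  exact Int.ofNat_le.symm

theorem vnorm_add {d : ℕ} {u w : Fin d → ℤ} {A B : ℕ} (hu : vnorm u ≤ A) (hw : vnorm w ≤ B) :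
    vnorm (u + w) ≤ A + B := by
  rw [vnorm_le] at *
  intro i
  have := abs_add_le (u i) (w i)
  have := hu i
  have := hw i
  simp only [Pi.add_apply]; push_cast; linarith

theorem vnorm_sub {d : ℕ} {u w : Fin d → ℤ} {A B : ℕ} (hu : vnorm u ≤ A) (hw : vnorm w ≤ B) :
    vnorm (u - w) ≤ A + B := by
  rw [sub_eq_add_neg]
  refine vnorm_add hu ?_
  rw [vnorm_le] at *
  intro i
  simpa using hw i

theorem vnorm_edge {V : Type} [Fintype V] [DecidableEq V] {d : ℕ} (G : MWG V d) {v v' : V}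
    {u : Fin d → ℤ} (h : (v, u, v') ∈ G.E) : vnorm u ≤ enorm G :=
  Finset.le_sup (f := fun e : V × (Fin d → ℤ) × V => vnorm e.2.1) (G.finE.mem_toFinset.2 h)

/-- closed sets of configurations -/
def ClosedS {V : Type} [Fintype V] [DecidableEq V] {d : ℕ} (G : MWG V d) (S : Set (Conf V d)) :
    Prop :=
  ∀ v s, (v, s) ∈ S → (v ∈ G.P1 → ∃ u v', (v, u, v') ∈ G.E ∧ (v', s + u) ∈ S) ∧
    (v ∉ G.P1 → ∀ u v', (v, u, v') ∈ G.E → (v', s + u) ∈ S)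

/-- uniformly winning vertices -/
def Ug {V : Type} [Fintype V] [DecidableEq V] {d : ℕ} (G : MWG V d) : Set V :=
  {v | ∃ (B : ℕ) (S : Set (Conf V d)), ClosedS G S ∧ (v, 0) ∈ S ∧ ∀ c ∈ S, vnorm c.2 ≤ B}

/-- consistent up to time k -/
def PExt {V : Type} [Fintype V] [DecidableEq V] {d : ℕ} (G : MWG V d) (σ : Strat V d) (v₀ : V)
    (k : ℕ) (ρ : ℕ → Conf V d) : Prop :=
  ρ 0 = (v₀, 0) ∧ ∀ t < k, Step G (ρ t) (ρ (t+1)) ∧ ((ρ t).1 ∈ G.P1 →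
    ρ (t+1) = ((σ (hist ρ t) (ρ t)).2, (ρ t).2 + (σ (hist ρ t) (ρ t)).1))

theorem hist_congr {V : Type} {d : ℕ} {ρ ρ' : ℕ → Conf V d} {k : ℕ}
    (h : ∀ t < k, ρ t = ρ' t) : hist ρ k = hist ρ' k := by
  unfold hist
  apply List.map_congr_left
  intro a ha
  exact h a (List.mem_range.1 ha)

theorem hist_succ {V : Type} {d : ℕ} (ρ : ℕ → Conf V d) (k : ℕ) :
    hist ρ (k+1) = hist ρ k ++ [ρ k] := by
  simp [hist, List.range_succ]

theorem hist_path {V : Type} [Fintype V] [DecidableEq V] {d : ℕ} (G : MWG V d)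
    (ρ : ℕ → Conf V d) (k : ℕ) (h : ∀ t < k, Step G (ρ t) (ρ (t+1))) :
    IsPathL G (hist ρ k ++ [ρ k]) := by
  rw [← hist_succ]
  unfold IsPathL hist
  change List.IsChain _ _
  rw [List.isChain_map]
  rw [List.isChain_range_succ]
  exact h

theorem PExt.snoc {V : Type} [Fintype V] [DecidableEq V] {d : ℕ} {G : MWG V d} {σ : Strat V d}
    {v₀ : V} {k : ℕ} {ρ : ℕ → Conf V d} (h : PExt G σ v₀ k ρ) (c : Conf V d)
    (hs : Step G (ρ k) c) (hc : (ρ k).1 ∈ G.P1 →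
      c = ((σ (hist ρ k) (ρ k)).2, (ρ k).2 + (σ (hist ρ k) (ρ k)).1)) :
    PExt G σ v₀ (k+1) (Function.update ρ (k+1) c) := by
  have h1 : ∀ t ≤ k, Function.update ρ (k+1) c t = ρ t := by
    intro t ht
    rw [Function.update_of_ne (by omega)]
  refine ⟨by rw [h1 0 (by omega)]; exact h.1, ?_⟩
  intro t ht
  rw [h1 t (by omega), hist_congr (ρ' := ρ) (fun s hs => h1 s (by omega))]
  rcases Nat.lt_or_ge t k with h2 | h2
  · rw [h1 (t+1) (by omega)]
    exact h.2 t h2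
  · obtain rfl : t = k := by omega
    rw [Function.update_self]
    exact ⟨hs, hc⟩

theorem ext_claim {V : Type} [Fintype V] [DecidableEq V] {d : ℕ} (G : MWG V d) (σ : Strat V d)
    (hσ : ValidStrat G (G.P1 : Set V) σ) (v₀ : V) (k : ℕ) (ρ : ℕ → Conf V d)
    (h : PExt G σ v₀ k ρ) (hU : (ρ k).1 ∉ Ug G) (B : ℕ) :
    ∃ k' ρ', k < k' ∧ (∀ t ≤ k, ρ' t = ρ t) ∧ PExt G σ v₀ k' ρ' ∧ (ρ' k').1 ∉ Ug G ∧
      B < vnorm (ρ' k').2 := by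
  by_contra hcon
  push Not at hcon
  set B0 := max B (vnorm (ρ k).2) with hB0
  have hb : ∀ k' ρ', k ≤ k' → (∀ t ≤ k, ρ' t = ρ t) → PExt G σ v₀ k' ρ' → (ρ' k').1 ∉ Ug G →
      vnorm (ρ' k').2 ≤ B0 := by
    intro k' ρ' h1 h2 h3 h4
    rcases h1.eq_or_lt with h5 | h5
    · subst h5
      rw [h2 k le_rfl]; exact le_max_right _ _
    · exact (hcon k' ρ' h5 h2 h3 h4).trans (le_max_left _ _)
  have hch : ∀ v, ∃ (BU : ℕ) (SU : Set (Conf V d)), v ∈ Ug G → ClosedS G SU ∧ (v, 0) ∈ SU ∧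
      ∀ c ∈ SU, vnorm c.2 ≤ BU := by
    intro v
    by_cases hv : v ∈ Ug G
    · obtain ⟨b, S, hS⟩ := hv
      exact ⟨b, S, fun _ => hS⟩
    · exact ⟨0, ∅, fun h => absurd h hv⟩
  choose BU SU hSU using hch
  set M := enorm G
  set S0 : Set (Conf V d) := {c | ∃ k' ρ', k ≤ k' ∧ (∀ t ≤ k, ρ' t = ρ t) ∧ PExt G σ v₀ k' ρ' ∧
    c = ρ' k' ∧ c.1 ∉ Ug G} with hS0
  set S1 : Set (Conf V d) := {c | ∃ v' ∈ Ug G, ∃ a : Fin d → ℤ, vnorm a ≤ B0 + M ∧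
    (c.1, c.2 - a) ∈ SU v'} with hS1
  have hS0b : ∀ c ∈ S0, vnorm c.2 ≤ B0 := by
    rintro c ⟨k', ρ', h1, h2, h3, h4, h5⟩
    subst h4
    exact hb k' ρ' h1 h2 h3 h5
  have hS1b : ∀ c ∈ S1, vnorm c.2 ≤ (∑ v, BU v) + (B0 + M) := by
    rintro c ⟨v', hv', a, ha, hc⟩
    have h1 := (hSU v' hv').2.2 _ hc
    have h2 : BU v' ≤ ∑ v, BU v :=
      Finset.single_le_sum (f := BU) (fun _ _ => Nat.zero_le _) (Finset.mem_univ v')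
    have h3 := vnorm_add (h1.trans h2) ha
    simpa using h3
  have hnext : ∀ k' ρ', k ≤ k' → (∀ t ≤ k, ρ' t = ρ t) → PExt G σ v₀ k' ρ' → (ρ' k').1 ∉ Ug G →
      ∀ u v', ((ρ' k').1, u, v') ∈ G.E → ((ρ' k').1 ∈ G.P1 →
        (v', (ρ' k').2 + u) = ((σ (hist ρ' k') (ρ' k')).2, (ρ' k').2 + (σ (hist ρ' k') (ρ' k')).1)) →
      (v', (ρ' k').2 + u) ∈ S0 ∪ S1 := by
    intro k' ρ' h1 h2 h3 h4 u v' he hc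
    by_cases hv' : v' ∈ Ug G
    · right
      refine ⟨v', hv', (ρ' k').2 + u, vnorm_add (hb k' ρ' h1 h2 h3 h4) (vnorm_edge G he), ?_⟩
      simpa using (hSU v' hv').2.1
    · left
      refine ⟨k'+1, _, by omega, ?_, h3.snoc (v', (ρ' k').2 + u) ?_ hc, ?_, hv'⟩
      · intro t ht
        rw [Function.update_of_ne (by omega)]
        exact h2 t ht
      · simpa [Step] using he
      · simp
  have hcl : ClosedS G (S0 ∪ S1) := by
    rintro v s (⟨k', ρ', h1, h2, h3, h4, h5⟩ | ⟨v', hv', a, ha, hc⟩)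
    · have h6 : v = (ρ' k').1 := by rw [← h4]
      have h7 : s = (ρ' k').2 := by rw [← h4]
      subst h6 h7
      constructor
      · intro hv
        have hE := hσ (hist ρ' k') (ρ' k') (hist_path G ρ' k' (fun t ht => (h3.2 t ht).1)) hv
        exact ⟨_, _, hE, hnext k' ρ' h1 h2 h3 h5 _ _ hE (fun _ => rfl)⟩
      · intro hv u w he
        exact hnext k' ρ' h1 h2 h3 h5 _ _ he (fun h => absurd h hv)
    · obtain ⟨c1, c2⟩ := (hSU v' hv').1 _ _ hc
      constructor
      · intro hv
        obtain ⟨u, w, he, hw⟩ := c1 hv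
        refine ⟨u, w, he, Or.inr ⟨v', hv', a, ha, ?_⟩⟩
        rw [show s + u - a = s - a + u by abel]
        exact hw
      · intro hv u w he
        refine Or.inr ⟨v', hv', a, ha, ?_⟩
        rw [show s + u - a = s - a + u by abel]
        exact c2 hv u w he
  apply hU
  refine ⟨(∑ v, BU v) + (B0 + M) + B0, {c | (c.1, c.2 + (ρ k).2) ∈ S0 ∪ S1}, ?_, ?_, ?_⟩
  · intro v s hs
    obtain ⟨c1, c2⟩ := hcl _ _ hs
    constructor
    · intro hv
      obtain ⟨u, w, he, hw⟩ := c1 hv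
      refine ⟨u, w, he, ?_⟩
      simp only [Set.mem_setOf_eq]
      rw [show s + u + (ρ k).2 = s + (ρ k).2 + u by abel]
      exact hw
    · intro hv u w he
      simp only [Set.mem_setOf_eq]
      rw [show s + u + (ρ k).2 = s + (ρ k).2 + u by abel]
      exact c2 hv u w he
  · left
    exact ⟨k, ρ, le_rfl, fun _ _ => rfl, h, by simp, hU⟩
  · intro c hc
    have h1 : vnorm (c.2 + (ρ k).2) ≤ (∑ v, BU v) + (B0 + M) := by
      rcases hc with hc | hc
      · exact (hS0b _ hc).trans (by omega)
      · exact hS1b _ hc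
    have h2 := vnorm_sub h1 (le_max_right B (vnorm (ρ k).2))
    simpa using h2

theorem win_imp_Ug {V : Type} [Fintype V] [DecidableEq V] {d : ℕ} (G : MWG V d) (v₀ : V)
    (hwin : P1WinsBounding G v₀) : v₀ ∈ Ug G := by
  by_contra hv
  obtain ⟨σ, hσ, hw⟩ := hwin
  let T := {p : ℕ × (ℕ → Conf V d) // PExt G σ v₀ p.1 p.2 ∧ (p.2 p.1).1 ∉ Ug G}
  have hnext : ∀ (n : ℕ) (p : T), ∃ q : T, p.1.1 < q.1.1 ∧ (∀ t ≤ p.1.1, q.1.2 t = p.1.2 t) ∧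
      n < vnorm (q.1.2 q.1.1).2 := by
    intro n p
    obtain ⟨k', ρ', h1, h2, h3, h4, h5⟩ := ext_claim G σ hσ v₀ p.1.1 p.1.2 p.2.1 p.2.2 n
    exact ⟨⟨(k', ρ'), h3, h4⟩, h1, h2, h5⟩
  choose nx hnx using hnext
  let x0 : T := ⟨(0, fun _ => (v₀, 0)), ⟨rfl, fun t ht => by simp at ht⟩, hv⟩
  let x : ℕ → T := fun n => Nat.rec x0 (fun n p => nx n p) n
  have hx : ∀ n, x (n+1) = nx n (x n) := fun n => rfl
  have hk : ∀ n, n ≤ (x n).1.1 := by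
    intro n
    induction n with
    | zero => omega
    | succ n ih => have := (hnx n (x n)).1; rw [hx]; omega
  have hkm : ∀ n j, (x n).1.1 ≤ (x (n+j)).1.1 := by
    intro n j
    induction j with
    | zero => exact le_rfl
    | succ j ih => have := (hnx (n+j) (x (n+j))).1; rw [← add_assoc, hx]; omega
  have hag : ∀ n j, ∀ t ≤ (x n).1.1, (x (n+j)).1.2 t = (x n).1.2 t := by
    intro n j t ht
    induction j with
    | zero => rfl
    | succ j ih =>
      rw [← add_assoc, hx, (hnx (n+j) (x (n+j))).2.1 t (ht.trans (hkm n j)), ih]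
  let ρ : ℕ → Conf V d := fun t => (x t).1.2 t
  have hρ : ∀ t n, t ≤ n → ρ t = (x n).1.2 t := by
    intro t n h
    obtain ⟨j, rfl⟩ := Nat.exists_eq_add_of_le h
    exact (hag t j t (hk t)).symm
  have hst : ∀ t, Step G (ρ t) (ρ (t+1)) ∧ ((ρ t).1 ∈ G.P1 →
      ρ (t+1) = ((σ (hist ρ t) (ρ t)).2, (ρ t).2 + (σ (hist ρ t) (ρ t)).1)) := by
    intro t
    rw [hist_congr (fun s (hs : s < t) => hρ s (t+1) (by omega)), hρ t (t+1) (by omega),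
      hρ (t+1) (t+1) le_rfl]
    exact (x (t+1)).2.1.2 t (hk (t+1))
  obtain ⟨B, hB⟩ := hw ρ ⟨rfl, fun n => (hst n).1⟩ (fun n => (hst n).2)
  have h1 := (hnx B (x B)).2.2
  rw [← hx] at h1
  have h2 := hB (x (B+1)).1.1
  have h3 : ρ (x (B+1)).1.1 = (x (B+1)).1.2 (x (B+1)).1.1 := by
    obtain ⟨j, hj⟩ := Nat.exists_eq_add_of_le (hk (B+1))
    change (x (x (B+1)).1.1).1.2 (x (B+1)).1.1 = _
    have := hag (B+1) j (x (B+1)).1.1 le_rfl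
    rw [← hj] at this
    exact this
  rw [h3] at h2
  omega

/-- lexicographic maximum in the fibre -/
def MaxS {V : Type} {d : ℕ} (S : Set (Conf V d)) (l : List (Fin d → ℤ)) (v : V) (s : Fin d → ℤ) :
    Prop := (v, s) ∈ S ∧ ∀ t, (v, t) ∈ S → lexneg l (t - s)

/-- moves allowed by a priority list -/
def AlS {V : Type} {d : ℕ} (S : Set (Conf V d)) (M : ℕ) (l : List (Fin d → ℤ)) (v : V)
    (u : Fin d → ℤ) (v' : V) : Prop :=
  (∀ i, |u i| ≤ M) ∧ ∃ s, MaxS S l v s ∧ (v', s + u) ∈ S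

theorem als_cyc {V : Type} [Fintype V] {d : ℕ} (S : Set (Conf V d)) (M m : ℕ)
    (hm : m = Fintype.card V * M)
    (l : List (Fin d → ℤ)) (r : Fin d → ℤ) (hr : r ∈ l)
    (hc : ∀ c ∈ ibox d m, ∀ r ∈ l, ∀ r' ∈ l, ¬ (0 < r ⬝ᵥ c ∧ r' ⬝ᵥ c < 0))
    (k : ℕ) (f : ℕ → V) (w : ℕ → Fin d → ℤ) (hk : k ≤ Fintype.card V)
    (h : ∀ t < k, AlS S M l (f t) (w (t+1) - w t) (f (t+1))) (hf : f 0 = f k) :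
    r ⬝ᵥ (w k - w 0) ≤ 0 := by
  rcases Nat.eq_zero_or_pos k with h0 | h0
  · subst h0; simp
  obtain ⟨-, s0, hs0, -⟩ := h 0 h0
  have key : ∀ j ≤ k, ∃ s', (f j, s') ∈ S ∧ lexneg l (w j - w 0 + s0 - s') := by
    intro j
    induction j with
    | zero => intro _; exact ⟨s0, hs0.1, by simpa using lexneg_zero l⟩
    | succ j ih =>
      intro hj
      obtain ⟨s', h1, h2⟩ := ih (by omega)
      obtain ⟨-, s, hs, hs'⟩ := h j (by omega)
      refine ⟨_, hs', ?_⟩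
      have h3 := lexneg_add l h2 (hs.2 s' h1)
      convert h3 using 1
      abel
  obtain ⟨s', h1, h2⟩ := key k le_rfl
  rw [← hf] at h1
  have h3 := lexneg_add l h2 (hs0.2 s' h1)
  have h4 : w k - w 0 + s0 - s' + (s' - s0) = w k - w 0 := by abel
  rw [h4] at h3
  have hb : ∀ j ≤ k, ∀ i, |(w j - w 0) i| ≤ j * (M : ℤ) := by
    intro j
    induction j with
    | zero => intro _ i; simp
    | succ j ih =>
      intro hj i
      have h5 := ih (by omega) i
      have h6 := (h j (by omega)).1 i
      have h7 : (w (j+1) - w 0) i = (w j - w 0) i + (w (j+1) - w j) i := by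
        simp only [Pi.sub_apply]; ring
      rw [h7]
      refine (abs_add_le _ _).trans ?_
      push_cast
      linarith
  have hbox : w k - w 0 ∈ ibox d m := by
    rw [mem_ibox]
    intro i
    refine (hb k le_rfl i).trans ?_
    rw [hm]
    push_cast
    exact mul_le_mul_of_nonneg_right (by exact_mod_cast hk) (by positivity)
  exact lexneg_compat l _ (hc _ hbox) h3 r hr

theorem maxS_exists {V : Type} {d : ℕ} (S : Set (Conf V d)) (B : ℕ)
    (hB : ∀ c ∈ S, vnorm c.2 ≤ B) (l : List (Fin d → ℤ)) (v : V) (hv : ∃ s, (v, s) ∈ S) :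
    ∃ s, MaxS S l v s := by
  have hfin : {s | (v, s) ∈ S}.Finite := by
    apply (ibox d B).finite_toSet.subset
    intro s hs
    exact Finset.mem_coe.2 ((mem_ibox s).2 (vnorm_le.1 (hB _ hs)))
  obtain ⟨s, h1, h2⟩ := lex_max l _ hfin hv
  exact ⟨s, h1, fun t ht => h2 t ht⟩

theorem MaxS.pre {V : Type} {d : ℕ} {S : Set (Conf V d)} {l l' : List (Fin d → ℤ)} {v : V}
    {s : Fin d → ℤ} (h : MaxS S l' v s) (hl : l <+: l') : MaxS S l v s :=
  ⟨h.1, fun t ht => lexneg_prefix hl (h.2 t ht)⟩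

/-- memory of the strategy -/
noncomputable def stateOf {V : Type} {d : ℕ} (m : ℕ) (N : ℤ) (h : List (Conf V d)) :
    List (Fin d → ℤ) := h.foldl (fun l c => upd m N l c.2) []

theorem dot_bound {d : ℕ} (L M : ℕ) (r u : Fin d → ℤ) (hr : ∀ i, |r i| ≤ L)
    (hu : ∀ i, |u i| ≤ M) : r ⬝ᵥ u ≤ d * L * M := by
  have h1 : ∀ i ∈ (Finset.univ : Finset (Fin d)), r i * u i ≤ (L : ℤ) * M := by
    intro i _
    refine (le_abs_self _).trans ?_
    rw [abs_mul]
    exact mul_le_mul (hr i) (hu i) (abs_nonneg _) (by positivity)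
  have h2 := Finset.sum_le_card_nsmul _ _ _ h1
  simp only [Finset.card_univ, Fintype.card_fin, nsmul_eq_mul] at h2
  rw [dotProduct]
  linarith

theorem strat_exists {V : Type} [Fintype V] [DecidableEq V] {d : ℕ} (G : MWG V d) (v₀ : V)
    (S : Set (Conf V d)) (B : ℕ) (hS : ClosedS G S) (h0 : (v₀, 0) ∈ S)
    (hB : ∀ c ∈ S, vnorm c.2 ≤ B) (m : ℕ) (hm : m = Fintype.card V * enorm G) (hm1 : 1 ≤ m)
    (D N : ℤ) (hDD : D = d * ((d * m) ^ (d - 1) : ℕ) * enorm G)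
    (hN : N = ((Rset d m).card + 1) * ((Fintype.card V + 1) * D)) :
    ∃ σ : Strat V d, ValidStrat G (G.P1 : Set V) σ ∧
      ∀ ρ, IsPlay G v₀ ρ → Consistent (G.P1 : Set V) σ ρ →
        ∀ t, ∀ r ∈ Rset d m, 0 ≤ slk m N (ρ t).2 r := by
  have hmv : ∀ (l : List (Fin d → ℤ)) (v : V), ∃ p : (Fin d → ℤ) × V, (v, p.1, p.2) ∈ G.E ∧
      (v ∈ G.P1 → (∃ s, (v, s) ∈ S) → ∃ s, MaxS S l v s ∧ (p.2, s + p.1) ∈ S) := by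
    intro l v
    by_cases hv : v ∈ G.P1 ∧ ∃ s, (v, s) ∈ S
    · obtain ⟨s, hs⟩ := maxS_exists S B hB l v hv.2
      obtain ⟨u, v', he, h⟩ := (hS v s hs.1).1 hv.1
      exact ⟨(u, v'), he, fun _ _ => ⟨s, hs, h⟩⟩
    · obtain ⟨u, v', he⟩ := G.serial v
      exact ⟨(u, v'), he, fun h1 h2 => absurd ⟨h1, h2⟩ hv⟩
  choose mv hmvE hmvS using hmv
  refine ⟨fun h c => mv (stateOf m N (h ++ [c])) c.1, fun h c _ _ => hmvE _ _, ?_⟩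
  intro ρ hρ hcon
  set l : ℕ → List (Fin d → ℤ) := fun t => stateOf m N (hist ρ (t+1)) with hl
  have hstep : ∀ t, (∃ s, ((ρ t).1, s) ∈ S) → ∃ s, MaxS S (l t) (ρ t).1 s ∧
      ((ρ (t+1)).1, s + ((ρ (t+1)).2 - (ρ t).2)) ∈ S := by
    intro t ht
    by_cases hv : (ρ t).1 ∈ G.P1
    · have h1 := hcon t hv
      obtain ⟨s, hs, hs'⟩ := hmvS (l t) (ρ t).1 hv ht
      refine ⟨s, hs, ?_⟩
      simp only [hl, hist_succ] at hs'
      rw [h1]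
      simpa using hs'
    · obtain ⟨s, hs⟩ := maxS_exists S B hB (l t) _ ht
      exact ⟨s, hs, (hS _ s hs.1).2 hv _ _ (hρ.2 t)⟩
  have hin : ∀ t, ∃ s, ((ρ t).1, s) ∈ S := by
    intro t
    induction t with
    | zero => rw [hρ.1]; exact ⟨0, h0⟩
    | succ t ih =>
      obtain ⟨s, -, h⟩ := hstep t ih
      exact ⟨_, h⟩
  refine dynamics m hm1 D N (by rw [hDD]; positivity) hN (AlS S (enorm G)) ?_ ?_
    (fun t => (ρ t).1) (fun t => (ρ t).2) l (by simp [hρ.1]) ?_ ?_ ?_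
  · intro r hr l v u v' h
    rw [hDD]
    exact dot_bound _ _ r u ((mem_Rset r).1 hr).2 h.1
  · intro l r hr hc k f w hk h hf
    exact als_cyc S (enorm G) m hm l r hr hc k f w hk h hf
  · simp [hl, stateOf, hist]
  · intro t
    simp only [hl]
    rw [hist_succ ρ (t+1)]
    simp [stateOf]
  · intro t l0 hl0
    refine ⟨vnorm_le.1 (vnorm_edge G (hρ.2 t)), ?_⟩
    obtain ⟨s, hs, h⟩ := hstep t (hin t)
    exact ⟨s, hs.pre hl0, h⟩

theorem final_bound {d m : ℕ} (hm : 1 ≤ m) (N : ℤ) (hN : 0 ≤ N) (a : Fin d → ℤ)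
    (h : ∀ r ∈ Rset d m, 0 ≤ slk m N a r) (i : Fin d) :
    |a i| ≤ N * ((2 * m + 1) ^ d * m : ℕ) := by
  have hL : (1 : ℤ) ≤ ((d * m) ^ (d - 1) : ℕ) := by
    have := i.2
    exact_mod_cast Nat.one_le_pow _ _ (Nat.mul_pos (by omega) hm)
  have hsum : ∀ e : ℤ, |e| = 1 → hz (ibox d m) (Pi.single i e) ≤ ((2 * m + 1) ^ d * m : ℕ) := by
    intro e he
    have h1 : ∀ c ∈ ibox d m, |(Pi.single i e : Fin d → ℤ) ⬝ᵥ c| ≤ (m : ℤ) := by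
      intro c hc
      rw [single_dotProduct, abs_mul, he, one_mul]
      exact (mem_ibox c).1 hc i
    have h2 := Finset.sum_le_card_nsmul _ _ _ h1
    rw [card_ibox, nsmul_eq_mul] at h2
    rw [hz]
    push_cast at h2 ⊢
    exact h2
  have hin : ∀ e : ℤ, |e| = 1 → Pi.single i e ∈ Rset d m := by
    intro e he
    rw [mem_Rset]
    constructor
    · intro h0
      have := congrFun h0 i
      simp at this
      subst this
      simp at he
    · intro j
      by_cases hj : j = i
      · subst hj; simpa [he] using hL
      · simp [hj]; positivity
  have hfin : ∀ e : ℤ, |e| = 1 → e * a i ≤ N * ((2 * m + 1) ^ d * m : ℕ) := by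
    intro e he
    have h1 := h _ (hin e he)
    simp only [slk, single_dotProduct] at h1
    have h2 := mul_le_mul_of_nonneg_left (hsum e he) hN
    linarith
  rw [abs_le]
  have h1 := hfin 1 (by simp)
  have h2 := hfin (-1) (by simp)
  constructor <;> linarith

theorem num_bound (n M d : ℕ) (hn : 1 ≤ n) (hM : 1 ≤ M) (K : ℕ)
    (hK : K ≤ (2 * (d * (n * M)) ^ (d - 1) + 1) ^ d) :
    (K + 1) * ((n + 1) * (d * (d * (n * M)) ^ (d - 1) * M)) * ((2 * (n * M) + 1) ^ d * (n * M))
      ≤ (4 * n * M) ^ (2 * (d + 2) ^ 3) := by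
  have hX0 : 4 * n * M = 4 * (n * M) := by ring
  have hnm : n ≤ n * M := Nat.le_mul_of_pos_right _ hM
  have hMm : M ≤ n * M := Nat.le_mul_of_pos_left _ hn
  rw [hX0]
  set m := n * M with hm
  have hm1 : 1 ≤ m := hn.trans hnm
  set X := 4 * m with hX
  have hX1 : 1 ≤ X := by omega
  have hd : d ≤ X ^ d := by
    have h1 : d < 2 ^ d := Nat.lt_two_pow_self
    have h2 : 2 ^ d ≤ X ^ d := Nat.pow_le_pow_left (by omega) d
    omega
  have hdm : d * m ≤ X ^ (d + 1) := by
    rw [pow_succ]; exact Nat.mul_le_mul hd (by omega)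
  set L := (d * m) ^ (d - 1) with hL
  have hLb : L ≤ X ^ (d * (d + 1)) := by
    calc L ≤ (X ^ (d + 1)) ^ (d - 1) := Nat.pow_le_pow_left hdm _
      _ ≤ (X ^ (d + 1)) ^ d := Nat.pow_le_pow_right (Nat.one_le_pow _ _ hX1) (by omega)
      _ = X ^ (d * (d + 1)) := by rw [← pow_mul]; ring_nf
  have h2L : 2 * L + 1 ≤ X ^ (d * (d + 1) + 1) := by
    have h1 : 1 ≤ X ^ (d * (d + 1)) := Nat.one_le_pow _ _ hX1
    rw [pow_succ]
    nlinarith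
  have hKb : K + 1 ≤ X ^ (d * (d * (d + 1) + 1) + 1) := by
    have h1 : K ≤ X ^ (d * (d * (d + 1) + 1)) := by
      refine hK.trans ?_
      rw [mul_comm d, pow_mul]
      exact Nat.pow_le_pow_left h2L d
    have h2 : 1 ≤ X ^ (d * (d * (d + 1) + 1)) := Nat.one_le_pow _ _ hX1
    rw [pow_succ]
    nlinarith
  have hn1 : n + 1 ≤ X ^ 1 := by rw [pow_one]; omega
  have hD : d * L * M ≤ X ^ d * X ^ (d * (d + 1)) * X ^ 1 :=
    Nat.mul_le_mul (Nat.mul_le_mul hd hLb) (by rw [pow_one]; omega)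
  have h2m : (2 * m + 1) ^ d * m ≤ X ^ d * X ^ 1 :=
    Nat.mul_le_mul (Nat.pow_le_pow_left (by omega) _) (by rw [pow_one]; omega)
  refine (Nat.mul_le_mul (Nat.mul_le_mul hKb (Nat.mul_le_mul hn1 hD)) h2m).trans ?_
  simp only [← pow_add]
  apply Nat.pow_le_pow_right hX1
  nlinarith [Nat.zero_le d, Nat.zero_le (d^2), Nat.zero_le (d^3)]

/-- small hypercube property, Lemma 3: if Player 1 wins the
bounding game from `v₀`, then she has a winning strategy from `v₀` which
ensures `‖ρ‖ ≤ (4|V|·‖E‖)^(2(d+2)³)` for all consistent plays `ρ` from `v₀`. -/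
theorem small_hypercube_property
    (V : Type) [Fintype V] [DecidableEq V] (d : ℕ) (G : MWG V d)
    (hE : 0 < enorm G) (hcyc : EveryCycleHasP1 G) (v₀ : V)
    (hwin : P1WinsBounding G v₀) :
    ∃ σ : Strat V d, ValidStrat G (G.P1 : Set V) σ ∧
      ∀ ρ, IsPlay G v₀ ρ → Consistent (G.P1 : Set V) σ ρ →
        ∀ n, vnorm ((ρ n).2) ≤ (4 * Fintype.card V * enorm G) ^ (2 * (d + 2)^3) := by
  classical
  obtain ⟨B, S, hS, h0, hB⟩ := win_imp_Ug G v₀ hwin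
  have hn : 1 ≤ Fintype.card V := Fintype.card_pos_iff.2 ⟨v₀⟩
  have hm1 : 1 ≤ Fintype.card V * enorm G := Nat.mul_pos hn hE
  obtain ⟨σ, hσ, h⟩ := strat_exists G v₀ S B hS h0 hB _ rfl hm1 _ _ rfl rfl
  refine ⟨σ, hσ, ?_⟩
  intro ρ hρ hc t
  rw [vnorm_le]
  intro i
  refine (final_bound hm1 _ (by positivity) _ (h ρ hρ hc t) i).trans ?_
  have hK : (Rset d (Fintype.card V * enorm G)).card ≤
      (2 * (d * (Fintype.card V * enorm G)) ^ (d - 1) + 1) ^ d := by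
    rw [← card_ibox]
    exact Finset.card_le_card (Finset.erase_subset _ _)
  have := num_bound (Fintype.card V) (enorm G) d hn hE _ hK
  exact_mod_cast this
end

section
/- Bounding games are determined: from every vertex v₀ of every multi-weighted game graph ⟨V,E,d⟩ in which every cycle contains at least one Player-1 vertex, exactly one of the two players has a winning strategy in the bounding game Γ⟨V,E,d⟩. -/
variable {V : Type} [Fintype V] [DecidableEq V] {d : ℕ}

namespace BG

theorem vnorm_le {d : ℕ} {u : Fin d → ℤ} {B : ℕ} : vnorm u ≤ B ↔ ∀ i, (u i).natAbs ≤ B := by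
  simp [vnorm]

theorem vnorm_add {d : ℕ} (u v : Fin d → ℤ) : vnorm (u + v) ≤ vnorm u + vnorm v := by
  rw [vnorm_le]
  intro i
  have h1 := (vnorm_le (u := u)).1 le_rfl i
  have h2 := (vnorm_le (u := v)).1 le_rfl i
  have := Int.natAbs_add_le (u i) (v i)
  simp only [Pi.add_apply]
  omega

theorem vnorm_neg {d : ℕ} (u : Fin d → ℤ) : vnorm (-u) = vnorm u := by
  simp [vnorm]

theorem step_bound (G : MWG V d) : ∃ M, ∀ c c', Step G c c' → vnorm c'.2 ≤ vnorm c.2 + M := by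
  obtain ⟨M, hM⟩ := (G.finE.image (fun e => vnorm e.2.1)).bddAbove
  refine ⟨M, fun c c' h => ?_⟩
  have h1 : vnorm (c'.2 - c.2) ≤ M := hM ⟨_, h, rfl⟩
  have h2 := vnorm_add c.2 (c'.2 - c.2)
  rw [add_sub_cancel] at h2
  omega

theorem succ_finite (G : MWG V d) (c : Conf V d) : {c' | Step G c c'}.Finite := by
  refine Set.Finite.subset (G.finE.image (fun e => (e.2.2, c.2 + e.2.1))) ?_
  intro c' h
  exact ⟨_, h, by simp⟩

theorem exists_step (G : MWG V d) (c : Conf V d) : ∃ c', Step G c c' := by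
  obtain ⟨u, v', h⟩ := G.serial c.1
  exact ⟨(v', c.2 + u), by simpa [Step] using h⟩

def Trap (G : MWG V d) (D : Set (Conf V d)) : Prop :=
  ∀ c ∈ D, (c.1 ∈ G.P1 → ∃ c', Step G c c' ∧ c' ∈ D) ∧
    (c.1 ∉ G.P1 → ∀ c', Step G c c' → c' ∈ D)

def Good (G : MWG V d) (v : V) : Prop :=
  ∃ B : ℕ, ∃ D, Trap G D ∧ ((v, 0) : Conf V d) ∈ D ∧ ∀ c ∈ D, vnorm c.2 ≤ B

/-- translate -/
def tr (a : Fin d → ℤ) (D : Set (Conf V d)) : Set (Conf V d) := {c | (c.1, c.2 - a) ∈ D}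

theorem step_tr {G : MWG V d} {c c' : Conf V d} (a : Fin d → ℤ) (h : Step G c c') :
    Step G (c.1, c.2 + a) (c'.1, c'.2 + a) := by
  simpa [Step] using h

theorem trap_tr {G : MWG V d} {D : Set (Conf V d)} (h : Trap G D) (a : Fin d → ℤ) :
    Trap G (tr a D) := by
  intro c hc
  obtain ⟨h1, h2⟩ := h _ hc
  refine ⟨fun hp => ?_, fun hp c' hs => ?_⟩
  · obtain ⟨c', hs, hD⟩ := h1 hp
    refine ⟨(c'.1, c'.2 + a), ?_, ?_⟩
    · simpa using step_tr a hs
    · simpa [tr] using hD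
  · apply h2 hp
    have := step_tr (-a) hs
    simpa [sub_eq_add_neg] using this

def R (G : MWG V d) (B : ℕ) : ℕ → Conf V d → Prop
  | 0, c => ¬ Good G c.1 ∧ B < vnorm c.2
  | k+1, c => ¬ Good G c.1 ∧ (B < vnorm c.2 ∨
      (c.1 ∈ G.P1 ∧ ∀ c', Step G c c' → R G B k c') ∨
      (c.1 ∉ G.P1 ∧ ∃ c', Step G c c' ∧ R G B k c'))

theorem R_ng {G : MWG V d} {B k : ℕ} {c : Conf V d} (h : R G B k c) : ¬ Good G c.1 := by
  cases k <;> exact h.1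

theorem R_succ {G : MWG V d} {B k : ℕ} {c : Conf V d} (h : R G B k c) : R G B (k+1) c := by
  induction k generalizing c with
  | zero => exact ⟨h.1, Or.inl h.2⟩
  | succ k ih =>
    refine ⟨h.1, ?_⟩
    rcases h.2 with h | ⟨hp, h⟩ | ⟨hp, c', hs, h⟩
    · exact Or.inl h
    · exact Or.inr (Or.inl ⟨hp, fun c' hs => ih (h c' hs)⟩)
    · exact Or.inr (Or.inr ⟨hp, c', hs, ih h⟩)

theorem R_mono {G : MWG V d} {B k l : ℕ} {c : Conf V d} (hkl : k ≤ l) (h : R G B k c) :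
    R G B l c := by
  induction hkl with
  | refl => exact h
  | step _ ih => exact R_succ ih

theorem reach (G : MWG V d) (B : ℕ) (c : Conf V d) (hc : ¬ Good G c.1) : ∃ k, R G B k c := by
  by_contra hR
  apply hc
  obtain ⟨M, hM⟩ := step_bound G
  have hex : ∀ w, ∃ (Bw : ℕ) (Dw : Set (Conf V d)), Good G w →
      (Trap G Dw ∧ ((w, 0) : Conf V d) ∈ Dw ∧ ∀ c ∈ Dw, vnorm c.2 ≤ Bw) := by
    intro w
    by_cases hw : Good G w
    · obtain ⟨Bw, Dw, h⟩ := hw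
      exact ⟨Bw, Dw, fun _ => h⟩
    · exact ⟨0, ∅, fun h => absurd h hw⟩
  choose Bw Dw hD using hex
  let X : Set (Conf V d) := {c | ¬ Good G c.1 ∧ ¬ ∃ k, R G B k c}
  let Y : Set (Conf V d) := {c | ∃ w a, Good G w ∧ vnorm a ≤ B + M ∧ c ∈ tr a (Dw w)}
  have hXB : ∀ c ∈ X, vnorm c.2 ≤ B := by
    intro c hc
    by_contra h
    exact hc.2 ⟨0, hc.1, by omega⟩
  have key : ∀ c ∈ X, ∀ c', Step G c c' → (¬ ∃ k, R G B k c') → c' ∈ X ∪ Y := by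
    intro c hcX c' hs hn
    by_cases hg : Good G c'.1
    · right
      refine ⟨c'.1, c'.2, hg, ?_, ?_⟩
      · have := hM _ _ hs
        have := hXB c hcX
        omega
      · simpa [tr] using (hD _ hg).2.1
    · exact Or.inl ⟨hg, hn⟩
  have htrap : Trap G (X ∪ Y) := by
    intro c hc
    rcases hc with hc | ⟨w, a, hw, ha, hc⟩
    · refine ⟨fun hp => ?_, fun hp c' hs => ?_⟩
      · by_contra hcon
        have hall : ∀ c', Step G c c' → ∃ k, R G B k c' := by
          intro c' hs
          by_contra hn
          exact hcon ⟨c', hs, key c hc c' hs hn⟩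
        choose! k hk using hall
        obtain ⟨K, hK⟩ := ((succ_finite G c).image k).bddAbove
        exact hc.2 ⟨K+1, hc.1, Or.inr (Or.inl ⟨hp, fun c' hs =>
          R_mono (hK ⟨c', hs, rfl⟩) (hk c' hs)⟩)⟩
      · apply key c hc c' hs
        rintro ⟨k, hk⟩
        exact hc.2 ⟨k+1, hc.1, Or.inr (Or.inr ⟨hp, c', hs, hk⟩)⟩
    · obtain ⟨h1, h2⟩ := trap_tr (hD w hw).1 a c hc
      refine ⟨fun hp => ?_, fun hp c' hs => Or.inr ⟨w, a, hw, ha, h2 hp c' hs⟩⟩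
      obtain ⟨c', hs, h⟩ := h1 hp
      exact ⟨c', hs, Or.inr ⟨w, a, hw, ha, h⟩⟩
  have hbd : ∀ c ∈ X ∪ Y, vnorm c.2 ≤ B + M + Finset.univ.sup Bw := by
    rintro c (hc | ⟨w, a, hw, ha, hc⟩)
    · have := hXB c hc
      omega
    · have h1 := (hD w hw).2.2 _ hc
      have h2 := vnorm_add (c.2 - a) a
      rw [sub_add_cancel] at h2
      have h3 : Bw w ≤ Finset.univ.sup Bw := Finset.le_sup (Finset.mem_univ w)
      simp only at h1
      omega
  refine ⟨B + M + Finset.univ.sup Bw + vnorm c.2, tr (-c.2) (X ∪ Y), trap_tr htrap _, ?_, ?_⟩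
  · have : c ∈ X ∪ Y := Or.inl ⟨hc, hR⟩
    simpa [tr] using this
  · intro c' hc'
    have h1 := hbd _ hc'
    have h2 := vnorm_add (c'.2 - -c.2) (-c.2)
    rw [sub_add_cancel, vnorm_neg] at h2
    simp only at h1
    omega

theorem p1_wins {G : MWG V d} {v : V} (h : Good G v) : P1WinsBounding G v := by
  classical
  obtain ⟨B, D, hT, hv, hB⟩ := h
  have hex : ∀ c : Conf V d, ∃ c', Step G c c' ∧ (c ∈ D → c.1 ∈ G.P1 → c' ∈ D) := by
    intro c
    by_cases hc : c ∈ D ∧ c.1 ∈ G.P1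
    · obtain ⟨c', hs, h⟩ := (hT c hc.1).1 hc.2
      exact ⟨c', hs, fun _ _ => h⟩
    · obtain ⟨c', hs⟩ := exists_step G c
      exact ⟨c', hs, fun h1 h2 => absurd ⟨h1, h2⟩ hc⟩
  choose f hf hfD using hex
  refine ⟨fun _ c => ((f c).2 - c.2, (f c).1), fun _ c _ _ => hf c, ?_⟩
  intro ρ hρ hcons
  have hmem : ∀ n, ρ n ∈ D := by
    intro n
    induction n with
    | zero => rw [hρ.1]; exact hv
    | succ n ih =>
      by_cases hp : (ρ n).1 ∈ G.P1
      · have := hcons n hp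
        simp only [add_sub_cancel] at this
        rw [this]
        exact hfD _ ih hp
      · exact (hT _ ih).2 hp _ (hρ.2 n)
  exact ⟨B, fun n => hB _ (hmem n)⟩

def mx (l : List (Conf V d)) : ℕ := (l.map fun c => vnorm c.2).foldr max 0

theorem mx_le {l : List (Conf V d)} {B : ℕ} : mx l ≤ B ↔ ∀ c ∈ l, vnorm c.2 ≤ B := by
  induction l with
  | nil => simp [mx]
  | cons a l ih =>
    have : mx (a :: l) = max (vnorm a.2) (mx l) := rfl
    rw [this, max_le_iff, ih]
    simp

theorem p2_wins {G : MWG V d} {v : V} (h : ¬ Good G v) : P2WinsBounding G v := by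
  classical
  let rk : ℕ → Conf V d → ℕ := fun B c => sInf {k | R G B k c}
  have hrk : ∀ B c, ¬ Good G c.1 → R G B (rk B c) c := by
    intro B c hc
    exact Nat.sInf_mem (s := {k | R G B k c}) (reach G B c hc)
  have hrk_lt : ∀ B k c c', R G B k c' → k < rk B c → ¬ Good G c'.1 ∧ rk B c' < rk B c := by
    intro B k c c' hR hk
    exact ⟨R_ng hR, lt_of_le_of_lt (Nat.sInf_le hR) hk⟩
  have hmain : ∀ B c, ¬ Good G c.1 → vnorm c.2 ≤ B →
      (c.1 ∈ G.P1 → ∀ c', Step G c c' → ¬ Good G c'.1 ∧ rk B c' < rk B c) ∧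
      (c.1 ∉ G.P1 → ∃ c', Step G c c' ∧ ¬ Good G c'.1 ∧ rk B c' < rk B c) := by
    intro B c hc hB
    have h1 := hrk B c hc
    obtain hk | ⟨k, hk⟩ : rk B c = 0 ∨ ∃ k, rk B c = k + 1 := by
      cases rk B c <;> simp
    · rw [hk] at h1
      have := h1.2
      omega
    · rw [hk] at h1
      rcases h1.2 with h | ⟨hp, h⟩ | ⟨hp, c', hs, h⟩
      · omega
      · exact ⟨fun _ c' hs => hrk_lt B k c c' (h c' hs) (by omega), fun h => absurd hp h⟩
      · exact ⟨fun h => absurd h hp, fun _ => ⟨c', hs, hrk_lt B k c c' h (by omega)⟩⟩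
  have hex : ∀ (B : ℕ) (c : Conf V d), ∃ c', Step G c c' ∧
      (¬ Good G c.1 → vnorm c.2 ≤ B → c.1 ∉ G.P1 → ¬ Good G c'.1 ∧ rk B c' < rk B c) := by
    intro B c
    by_cases hc : ¬ Good G c.1 ∧ vnorm c.2 ≤ B ∧ c.1 ∉ G.P1
    · obtain ⟨c', hs, h⟩ := (hmain B c hc.1 hc.2.1).2 hc.2.2
      exact ⟨c', hs, fun _ _ _ => h⟩
    · obtain ⟨c', hs⟩ := exists_step G c
      exact ⟨c', hs, fun h1 h2 h3 => absurd ⟨h1, h2, h3⟩ hc⟩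
  choose f hf hfR using hex
  refine ⟨fun h c => ((f (mx (h ++ [c])) c).2 - c.2, (f (mx (h ++ [c])) c).1),
    fun _ c _ _ => hf _ c, ?_⟩
  rintro ρ hρ hcons ⟨B, hB⟩
  let m : ℕ → ℕ := fun n => mx (hist ρ n ++ [ρ n])
  have hm : ∀ n b, m n ≤ b ↔ ∀ j ≤ n, vnorm (ρ j).2 ≤ b := by
    intro n b
    simp only [m]
    rw [mx_le]
    constructor
    · intro h j hj
      apply h
      rcases hj.lt_or_eq with hj | rfl
      · simp only [hist, List.mem_append, List.mem_map, List.mem_range]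
        exact Or.inl ⟨j, hj, rfl⟩
      · simp
    · intro h c hc
      simp only [hist, List.mem_append, List.mem_map, List.mem_range, List.mem_singleton] at hc
      rcases hc with ⟨j, hj, rfl⟩ | rfl
      · exact h j hj.le
      · exact h n le_rfl
  have hmn : ∀ n, vnorm (ρ n).2 ≤ m n := fun n => (hm n _).1 le_rfl n le_rfl
  have hmB : ∀ n, m n ≤ B := fun n => (hm n _).2 fun j _ => hB j
  have hmono : Monotone m := fun a b hab => (hm a _).2 fun j hj => (hm b _).1 le_rfl j (hj.trans hab)
  have hstep : ∀ n, ¬ Good G (ρ n).1 →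
      ¬ Good G (ρ (n+1)).1 ∧ rk (m n) (ρ (n+1)) < rk (m n) (ρ n) := by
    intro n hn
    by_cases hp : (ρ n).1 ∈ G.P1
    · exact (hmain (m n) _ hn (hmn n)).1 hp _ (hρ.2 n)
    · have := hcons n hp
      simp only [add_sub_cancel] at this
      rw [this]
      exact hfR (m n) _ hn (hmn n) hp
  have hng : ∀ n, ¬ Good G (ρ n).1 := by
    intro n
    induction n with
    | zero => rw [hρ.1]; exact h
    | succ n ih => exact (hstep n ih).1
  have hbdd : BddAbove (Set.range m) := ⟨B, by rintro _ ⟨n, rfl⟩; exact hmB n⟩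
  obtain ⟨N, hN⟩ := Nat.sSup_mem (Set.range_nonempty m) hbdd
  have hconst : ∀ n, m (N + n) = m N := by
    intro n
    apply le_antisymm
    · rw [hN]; exact le_csSup hbdd ⟨_, rfl⟩
    · exact hmono (by omega)
  have hdec : ∀ n, rk (m N) (ρ (N + n)) + n ≤ rk (m N) (ρ N) := by
    intro n
    induction n with
    | zero => simp
    | succ n ih =>
      have := (hstep (N + n) (hng _)).2
      rw [hconst] at this
      have e : N + (n + 1) = N + n + 1 := rfl
      rw [e]
      omega
  have := hdec (rk (m N) (ρ N) + 1)
  omega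

theorem not_both {G : MWG V d} {v : V} (h1 : P1WinsBounding G v) (h2 : P2WinsBounding G v) :
    False := by
  classical
  obtain ⟨σ, hσ, w1⟩ := h1
  obtain ⟨τ, hτ, w2⟩ := h2
  let mv : List (Conf V d) → Conf V d → (Fin d → ℤ) × V :=
    fun h c => if c.1 ∈ G.P1 then σ h c else τ h c
  let st : ℕ → List (Conf V d) × Conf V d := fun n =>
    Nat.rec ([], (v, 0)) (fun _ s => (s.1 ++ [s.2], ((mv s.1 s.2).2, s.2.2 + (mv s.1 s.2).1))) n
  have hst : ∀ n, st (n+1) = ((st n).1 ++ [(st n).2],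
      ((mv (st n).1 (st n).2).2, (st n).2.2 + (mv (st n).1 (st n).2).1)) := fun _ => rfl
  let ρ : ℕ → Conf V d := fun n => (st n).2
  have hh : ∀ n, hist ρ n = (st n).1 := by
    intro n
    induction n with
    | zero => rfl
    | succ n ih =>
      rw [hst, ← ih]
      simp [hist, List.range_succ, ρ]
  have hstep : ∀ n, IsPathL G ((st n).1 ++ [(st n).2]) → Step G (ρ n) (ρ (n+1)) := by
    intro n hp
    have : ((st n).2.1, (mv (st n).1 (st n).2).1, (mv (st n).1 (st n).2).2) ∈ G.E := by
      by_cases hc : (st n).2.1 ∈ G.P1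
      · simp only [mv, if_pos hc]
        exact hσ _ _ hp hc
      · simp only [mv, if_neg hc]
        exact hτ _ _ hp hc
    simpa [Step, ρ, hst] using this
  have hpath : ∀ n, IsPathL G ((st n).1 ++ [(st n).2]) := by
    intro n
    induction n with
    | zero => exact List.isChain_singleton _
    | succ n ih =>
      have hs := hstep n ih
      have e : (st (n+1)).1 = (st n).1 ++ [(st n).2] := rfl
      rw [e]
      unfold IsPathL at ih ⊢
      refine List.IsChain.append ih (List.isChain_singleton _) ?_
      intro x hx y hy
      simp at hx hy
      subst hx hy
      exact hs
  have hplay : IsPlay G v ρ := ⟨rfl, fun n => hstep n (hpath n)⟩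
  refine w2 ρ hplay ?_ (w1 ρ hplay ?_)
  · intro n hn
    have hn' : (st n).2.1 ∉ G.P1 := hn
    rw [hh]
    change (st (n+1)).2 = _
    rw [hst]
    simp only [mv, if_neg hn', ρ]
  · intro n hn
    have hn' : (st n).2.1 ∈ G.P1 := hn
    rw [hh]
    change (st (n+1)).2 = _
    rw [hst]
    simp only [mv, if_pos hn', ρ]

end BG

/-- determinacy of bounding games: from every vertex of every
multi-weighted game graph in which every cycle contains at least one Player-1
vertex, exactly one of the two players has a winning strategy in the bounding
game. -/
theorem bounding_game_determined
    (V : Type) [Fintype V] [DecidableEq V] (d : ℕ) (G : MWG V d)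
    (hcyc : EveryCycleHasP1 G) (v₀ : V) :
    Xor' (P1WinsBounding G v₀) (P2WinsBounding G v₀) := by
  by_cases h : BG.Good G v₀
  · exact Or.inl ⟨BG.p1_wins h, fun h2 => BG.not_both (BG.p1_wins h) h2⟩
  · exact Or.inr ⟨BG.p2_wins h, fun h1 => BG.not_both h1 (BG.p2_wins h)⟩
end
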